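/- arXiv:2604.09950 — 14 statements merged into one kernel-verified Lean document; each statement's English description precedes it below -/
import Mathlib

section
/- A function C : [0,1]×[0,1] → [0,1] is a bivariate copula if and only if there exists a family (h_v)_{v∈[0,1]} of Lebesgue-measurable functions h_v : [0,1] → [0,1] such that (i) C(v,u) = ∫₀ᵘ h_v(t) dt for all (v,u) ∈ [0,1]², (ii) for every t ∈ [0,1] the map v ↦ h_v(t) is monotone increasing, and (iii) ∫₀¹ h_v(t) dt = v for every v ∈ [0,1]. -/
open MeasureTheory Set

noncomputable section

/-- A bivariate copula: a function `[0,1]² → [0,1]` (encoded on `ℝ × ℝ`, with all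
conditions imposed on `[0,1]²`) with the copula boundary conditions and the
2-increasing property. -/
def IsCopula (C : ℝ → ℝ → ℝ) : Prop :=
  (∀ v ∈ Icc (0:ℝ) 1, ∀ u ∈ Icc (0:ℝ) 1, C v u ∈ Icc (0:ℝ) 1) ∧
  (∀ v ∈ Icc (0:ℝ) 1, C v 0 = 0) ∧
  (∀ u ∈ Icc (0:ℝ) 1, C 0 u = 0) ∧
  (∀ v ∈ Icc (0:ℝ) 1, C v 1 = v) ∧
  (∀ u ∈ Icc (0:ℝ) 1, C 1 u = u) ∧
  (∀ v₁ v₂ u₁ u₂ : ℝ, 0 ≤ v₁ → v₁ ≤ v₂ → v₂ ≤ 1 → 0 ≤ u₁ → u₁ ≤ u₂ → u₂ ≤ 1 →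
    0 ≤ C v₂ u₂ - C v₁ u₂ - C v₂ u₁ + C v₁ u₁)

/-- A derivative family `(h_v)_{v ∈ [0,1]}` for a copula `C`:
each `h_v : [0,1] → [0,1]` is Lebesgue measurable, `C(v,u) = ∫₀ᵘ h_v(t) dt`,
`v ↦ h_v(t)` is increasing, and `∫₀¹ h_v(t) dt = v`. -/
def IsDerivFamily (C : ℝ → ℝ → ℝ) (h : ℝ → ℝ → ℝ) : Prop :=
  (∀ v ∈ Icc (0:ℝ) 1, Measurable (h v)) ∧
  (∀ v ∈ Icc (0:ℝ) 1, ∀ t ∈ Icc (0:ℝ) 1, h v t ∈ Icc (0:ℝ) 1) ∧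
  (∀ v ∈ Icc (0:ℝ) 1, ∀ u ∈ Icc (0:ℝ) 1, C v u = ∫ t in (0:ℝ)..u, h v t) ∧
  (∀ t ∈ Icc (0:ℝ) 1, MonotoneOn (fun v => h v t) (Icc (0:ℝ) 1)) ∧
  (∀ v ∈ Icc (0:ℝ) 1, (∫ t in (0:ℝ)..1, h v t) = v)

/-- The second argument clamped to `[0,1]`. -/
def clampC (C : ℝ → ℝ → ℝ) (v t : ℝ) : ℝ := C v (max 0 (min 1 t))

/-- Forward difference quotients of step `1/(n+1)`. -/
def quotC (C : ℝ → ℝ → ℝ) (v t : ℝ) (n : ℕ) : ℝ :=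
  ((n:ℝ) + 1) * (clampC C v (t + ((n:ℝ) + 1)⁻¹) - clampC C v t)

lemma clamp_mem (t : ℝ) : max 0 (min 1 t) ∈ Icc (0:ℝ) 1 :=
  ⟨le_max_left _ _, max_le zero_le_one (min_le_left _ _)⟩

lemma clamp_eq {t : ℝ} (ht : t ∈ Icc (0:ℝ) 1) : max 0 (min 1 t) = t := by
  rw [min_eq_right ht.2, max_eq_right ht.1]

lemma clamp_mono {s t : ℝ} (h : s ≤ t) : max 0 (min 1 s) ≤ max (0:ℝ) (min 1 t) := by
  gcongr

lemma clamp_sub {s t : ℝ} (h : s ≤ t) : max (0:ℝ) (min 1 t) - max 0 (min 1 s) ≤ t - s := by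
  rcases max_cases (0:ℝ) (min 1 t) with h1 | h1 <;> rcases max_cases (0:ℝ) (min 1 s) with h2 | h2 <;>
  rcases min_cases (1:ℝ) t with h3 | h3 <;> rcases min_cases (1:ℝ) s with h4 | h4 <;> linarith

lemma clampC_incr {C : ℝ → ℝ → ℝ} (hC : IsCopula C) {v w s t : ℝ} (hv : 0 ≤ v) (hvw : v ≤ w)
    (hw : w ≤ 1) (hst : s ≤ t) :
    clampC C v t - clampC C v s ≤ clampC C w t - clampC C w s := by
  obtain ⟨-, -, -, -, -, h⟩ := hC
  have := h v w _ _ hv hvw hw (clamp_mem s).1 (clamp_mono hst) (clamp_mem t).2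
  unfold clampC
  linarith

lemma clampC_bounds {C : ℝ → ℝ → ℝ} (hC : IsCopula C) {v s t : ℝ} (hv : v ∈ Icc (0:ℝ) 1)
    (hst : s ≤ t) :
    0 ≤ clampC C v t - clampC C v s ∧ clampC C v t - clampC C v s ≤ t - s := by
  have h0 := clampC_incr hC le_rfl hv.1 hv.2 hst
  have h1 := clampC_incr hC hv.1 hv.2 le_rfl hst
  obtain ⟨-, -, c0, -, c1, -⟩ := hC
  have e := clamp_sub hst
  unfold clampC at *
  rw [c0 _ (clamp_mem s), c0 _ (clamp_mem t)] at h0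
  rw [c1 _ (clamp_mem s), c1 _ (clamp_mem t)] at h1
  constructor <;> linarith

lemma clampC_lip {C : ℝ → ℝ → ℝ} (hC : IsCopula C) {v : ℝ} (hv : v ∈ Icc (0:ℝ) 1) :
    LipschitzWith 1 (clampC C v) := by
  apply LipschitzWith.of_le_add
  intro x y
  rcases le_total x y with h | h
  · have := (clampC_bounds hC hv h).1
    have := dist_nonneg (x := x) (y := y)
    linarith
  · have := (clampC_bounds hC hv h).2
    rw [Real.dist_eq, abs_of_nonneg (by linarith)]
    linarith

lemma quotC_mem {C : ℝ → ℝ → ℝ} (hC : IsCopula C) {v : ℝ} (hv : v ∈ Icc (0:ℝ) 1) (t : ℝ) (n : ℕ) :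
    quotC C v t n ∈ Icc (0:ℝ) 1 := by
  have hn : (0:ℝ) < (n:ℝ) + 1 := by positivity
  have hi : 0 < ((n:ℝ) + 1)⁻¹ := by positivity
  obtain ⟨h1, h2⟩ := clampC_bounds hC hv (s := t) (t := t + ((n:ℝ) + 1)⁻¹) (by linarith)
  refine ⟨mul_nonneg hn.le h1, ?_⟩
  calc quotC C v t n ≤ ((n:ℝ) + 1) * (t + ((n:ℝ) + 1)⁻¹ - t) :=
        mul_le_mul_of_nonneg_left h2 hn.le
    _ = 1 := by rw [add_sub_cancel_left, mul_inv_cancel₀ hn.ne']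

lemma quotC_bdd {C : ℝ → ℝ → ℝ} (hC : IsCopula C) {v : ℝ} (hv : v ∈ Icc (0:ℝ) 1) (t : ℝ) :
    Filter.IsBoundedUnder (· ≤ ·) Filter.atTop (quotC C v t) :=
  Filter.isBoundedUnder_of ⟨1, fun n => (quotC_mem hC hv t n).2⟩

lemma quotC_cobdd {C : ℝ → ℝ → ℝ} (hC : IsCopula C) {v : ℝ} (hv : v ∈ Icc (0:ℝ) 1) (t : ℝ) :
    Filter.IsCoboundedUnder (· ≤ ·) Filter.atTop (quotC C v t) :=
  Filter.IsBoundedUnder.isCoboundedUnder_le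
    (Filter.isBoundedUnder_of ⟨0, fun n => (quotC_mem hC hv t n).1⟩)

lemma quotC_tendsto {C : ℝ → ℝ → ℝ} {v t : ℝ} (h : DifferentiableAt ℝ (clampC C v) t) :
    Filter.Tendsto (quotC C v t) Filter.atTop (nhds (deriv (clampC C v) t)) := by
  have h1 := h.hasDerivAt.tendsto_slope_zero
  have h2 : Filter.Tendsto (fun n : ℕ => ((n:ℝ) + 1)⁻¹) Filter.atTop (nhdsWithin 0 {0}ᶜ) := by
    rw [tendsto_nhdsWithin_iff]
    constructor
    · simpa using tendsto_one_div_add_atTop_nhds_zero_nat (𝕜 := ℝ)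
    · filter_upwards with n
      simp only [mem_compl_iff, mem_singleton_iff]
      positivity
  have h3 := h1.comp h2
  refine h3.congr fun n => ?_
  simp [quotC]

lemma quotC_integral {C : ℝ → ℝ → ℝ} (hC : IsCopula C) {v : ℝ} (hv : v ∈ Icc (0:ℝ) 1)
    {u : ℝ} (hu : u ∈ Icc (0:ℝ) 1) :
    C v u = ∫ t in (0:ℝ)..u, Filter.limsup (quotC C v t) Filter.atTop := by
  have hL := clampC_lip hC hv
  have hac : AbsolutelyContinuousOnInterval (clampC C v) 0 u :=
    hL.lipschitzOnWith.absolutelyContinuousOnInterval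
  have h1 := hac.integral_deriv_eq_sub
  have h2 : (∫ t in (0:ℝ)..u, Filter.limsup (quotC C v t) Filter.atTop)
      = ∫ t in (0:ℝ)..u, deriv (clampC C v) t := by
    apply intervalIntegral.integral_congr_ae
    filter_upwards [hL.ae_differentiableAt_real] with t ht _
    exact (quotC_tendsto ht).limsup_eq
  have e0 : clampC C v 0 = 0 := by
    unfold clampC
    rw [clamp_eq ⟨le_rfl, zero_le_one⟩]
    exact hC.2.1 v hv
  have e1 : clampC C v u = C v u := by
    unfold clampC
    rw [clamp_eq hu]
  rw [h2, h1, e0, e1, sub_zero]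

lemma copula_forward {C : ℝ → ℝ → ℝ} (hC : IsCopula C) :
    IsDerivFamily C (fun v t => Filter.limsup (quotC C v t) Filter.atTop) := by
  refine ⟨fun v hv => ?_, fun v hv t _ => ⟨?_, ?_⟩, fun v hv u hu => quotC_integral hC hv hu,
    fun t _ v hv w hw hvw => ?_, fun v hv => ?_⟩
  · have hc : Continuous (clampC C v) := (clampC_lip hC hv).continuous
    refine Measurable.limsup (f := fun n t => quotC C v t n) fun n => ?_
    apply Continuous.measurable
    unfold quotC
    fun_prop
  · exact Filter.le_limsup_of_frequently_le
      (Filter.Frequently.of_forall fun n => (quotC_mem hC hv t n).1) (quotC_bdd hC hv t)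
  · exact Filter.limsup_le_of_le (quotC_cobdd hC hv t)
      (Filter.Eventually.of_forall fun n => (quotC_mem hC hv t n).2)
  · refine Filter.limsup_le_limsup (Filter.Eventually.of_forall fun n => ?_)
      (quotC_cobdd hC hv t) (quotC_bdd hC hw t)
    have hi : 0 < ((n:ℝ) + 1)⁻¹ := by positivity
    exact mul_le_mul_of_nonneg_left (clampC_incr hC hv.1 hvw hw.2 (by linarith)) (by positivity)
  · have := quotC_integral hC hv (u := 1) ⟨zero_le_one, le_rfl⟩
    rw [← this]
    exact hC.2.2.2.1 v hv

lemma copula_backward {C h : ℝ → ℝ → ℝ} (hh : IsDerivFamily C h) : IsCopula C := by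
  obtain ⟨hm, hb, hi, hmono, h1⟩ := hh
  have int : ∀ v ∈ Icc (0:ℝ) 1, ∀ a ∈ Icc (0:ℝ) 1, ∀ b ∈ Icc (0:ℝ) 1,
      IntervalIntegrable (h v) volume a b := by
    intro v hv a ha b hb'
    have : IntegrableOn (h v) (uIcc a b) := by
      apply Measure.integrableOn_of_bounded (M := 1)
      · simp
      · exact (hm v hv).aestronglyMeasurable
      · refine (ae_restrict_iff' measurableSet_uIcc).2 (Filter.Eventually.of_forall fun t ht => ?_)
        have := hb v hv t (uIcc_subset_Icc ha hb' ht)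
        rw [Real.norm_eq_abs, abs_of_nonneg this.1]
        exact this.2
    exact this.intervalIntegrable
  have z : (0:ℝ) ∈ Icc (0:ℝ) 1 := ⟨le_rfl, zero_le_one⟩
  have o : (1:ℝ) ∈ Icc (0:ℝ) 1 := ⟨zero_le_one, le_rfl⟩
  have inc : ∀ v ∈ Icc (0:ℝ) 1, ∀ a ∈ Icc (0:ℝ) 1, ∀ b ∈ Icc (0:ℝ) 1,
      C v b - C v a = ∫ t in a..b, h v t := by
    intro v hv a ha b hb'
    rw [hi v hv a ha, hi v hv b hb']
    exact intervalIntegral.integral_interval_sub_left (int v hv 0 z b hb') (int v hv 0 z a ha)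
  have lo : ∀ v ∈ Icc (0:ℝ) 1, ∀ a ∈ Icc (0:ℝ) 1, ∀ b ∈ Icc (0:ℝ) 1, a ≤ b →
      0 ≤ C v b - C v a := by
    intro v hv a ha b hb' hab
    rw [inc v hv a ha b hb']
    exact intervalIntegral.integral_nonneg hab fun t ht =>
      (hb v hv t ⟨ha.1.trans ht.1, ht.2.trans hb'.2⟩).1
  have up : ∀ v ∈ Icc (0:ℝ) 1, ∀ a ∈ Icc (0:ℝ) 1, ∀ b ∈ Icc (0:ℝ) 1, a ≤ b →
      C v b - C v a ≤ b - a := by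
    intro v hv a ha b hb' hab
    rw [inc v hv a ha b hb']
    have := intervalIntegral.integral_mono_on hab (int v hv a ha b hb')
      (intervalIntegrable_const (c := (1:ℝ))) fun t ht =>
      (hb v hv t ⟨ha.1.trans ht.1, ht.2.trans hb'.2⟩).2
    simpa using this
  have c0 : ∀ v ∈ Icc (0:ℝ) 1, C v 0 = 0 := fun v hv => by rw [hi v hv 0 z]; simp
  have c1 : ∀ v ∈ Icc (0:ℝ) 1, C v 1 = v := fun v hv => by rw [hi v hv 1 o]; exact h1 v hv
  refine ⟨fun v hv u hu => ?_, c0, fun u hu => ?_, c1, fun u hu => ?_, ?_⟩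
  · have := lo v hv 0 z u hu hu.1
    have := up v hv 0 z u hu hu.1
    have := c0 v hv
    exact ⟨by linarith, by linarith [hu.2]⟩
  · linarith [lo 0 z 0 z u hu hu.1, lo 0 z u hu 1 o hu.2, c0 0 z, c1 0 z]
  · linarith [up 1 o 0 z u hu hu.1, up 1 o u hu 1 o hu.2, c0 1 o, c1 1 o]
  · intro v w a b hv hvw hw ha hab hb'
    have mv : v ∈ Icc (0:ℝ) 1 := ⟨hv, hvw.trans hw⟩
    have mw : w ∈ Icc (0:ℝ) 1 := ⟨hv.trans hvw, hw⟩
    have ma : a ∈ Icc (0:ℝ) 1 := ⟨ha, hab.trans hb'⟩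
    have mb : b ∈ Icc (0:ℝ) 1 := ⟨ha.trans hab, hb'⟩
    have := intervalIntegral.integral_mono_on hab (int v mv a ma b mb) (int w mw a ma b mb)
      fun t ht => hmono t ⟨ha.trans ht.1, ht.2.trans hb'⟩ mv mw hvw
    rw [← inc v mv a ma b mb, ← inc w mw a ma b mb] at this
    linarith

/-- A function `C : [0,1]² → [0,1]` is a bivariate copula if and
only if it admits a derivative family `(h_v)_{v∈[0,1]}` of measurable functions
`h_v : [0,1] → [0,1]` with `C(v,u) = ∫₀ᵘ h_v(t) dt`, `v ↦ h_v(t)` increasing, and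
`∫₀¹ h_v(t) dt = v`. -/
theorem copula_iff_exists_derivFamily (C : ℝ → ℝ → ℝ) :
    IsCopula C ↔ ∃ h : ℝ → ℝ → ℝ, IsDerivFamily C h := by
  exact ⟨fun hC => ⟨_, copula_forward hC⟩, fun ⟨_, hh⟩ => copula_backward hh⟩

end
end

section
/- Let C and D be bivariate copulas with derivative families (h_v)_{v∈[0,1]} and (g_w)_{w∈[0,1]}, respectively. Then ∫₀¹ min(h_v(t), g_w(t)) dt = min(v,w) for all (v,w) ∈ [0,1]² if and only if C = D (i.e. C(v,u) = D(v,u) for all (v,u) ∈ [0,1]²). In other words, the upper product C ∨ D equals the comonotonicity copula M(v,w) = min(v,w) exactly when C = D. -/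
open MeasureTheory Set

noncomputable section

lemma aux_intervalIntegrable (f : ℝ → ℝ) (hf : Measurable f)
    (hb : ∀ t ∈ Icc (0:ℝ) 1, f t ∈ Icc (0:ℝ) 1) {a b : ℝ}
    (ha : a ∈ Icc (0:ℝ) 1) (hb' : b ∈ Icc (0:ℝ) 1) : IntervalIntegrable f volume a b := by
  have h01 : IntervalIntegrable f volume 0 1 := by
    refine (intervalIntegrable_const (c := (1:ℝ))).mono_fun hf.aestronglyMeasurable ?_
    refine (ae_restrict_iff' measurableSet_uIoc).2 (Filter.Eventually.of_forall ?_)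
    intro t ht
    rw [uIoc_of_le zero_le_one] at ht
    have := hb t ⟨ht.1.le, ht.2⟩
    simp only [Real.norm_eq_abs, abs_one]
    exact abs_le.2 ⟨by linarith [this.1], this.2⟩
  refine h01.mono_set ?_
  rw [uIcc_of_le (zero_le_one (α := ℝ))]
  exact uIcc_subset_Icc ha hb'

lemma aux_ae_eq (f k : ℝ → ℝ) (hf : IntervalIntegrable f volume 0 1)
    (hk : IntervalIntegrable k volume 0 1)
    (h : ∀ u ∈ Icc (0:ℝ) 1, (∫ t in (0:ℝ)..u, f t) = ∫ t in (0:ℝ)..u, k t) :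
    ∀ᵐ x, x ∈ Ioc (0:ℝ) 1 → f x = k x := by
  have h₂ : ∀ᵐ x : ℝ, x ≠ 1 := by simp [ae_iff, measure_singleton]
  filter_upwards [hf.ae_hasDerivAt_integral, hk.ae_hasDerivAt_integral, h₂] with x hx1 hx2 hne hx
  have hx' : x ∈ uIcc (0:ℝ) 1 := by
    rw [uIcc_of_le zero_le_one]; exact ⟨hx.1.le, hx.2⟩
  have d1 := hx1 hx' 0 (by simp)
  have d2 := hx2 hx' 0 (by simp)
  refine (d1.congr_of_eventuallyEq ?_).unique d2
  filter_upwards [Ioo_mem_nhds hx.1 (lt_of_le_of_ne hx.2 hne)] with u hu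
  exact (h u ⟨hu.1.le, hu.2.le⟩).symm

lemma aux_sub (f m : ℝ → ℝ) (u : ℝ) (hu : u ∈ Icc (0:ℝ) 1)
    (hf : ∀ a ∈ Icc (0:ℝ) 1, ∀ b ∈ Icc (0:ℝ) 1, IntervalIntegrable f volume a b)
    (hm : ∀ a ∈ Icc (0:ℝ) 1, ∀ b ∈ Icc (0:ℝ) 1, IntervalIntegrable m volume a b)
    (hle : ∀ t, m t ≤ f t) (heq : (∫ t in (0:ℝ)..1, m t) = ∫ t in (0:ℝ)..1, f t) :
    (∫ t in (0:ℝ)..u, m t) = ∫ t in (0:ℝ)..u, f t := by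
  have z : (0:ℝ) ∈ Icc (0:ℝ) 1 := by simp
  have o : (1:ℝ) ∈ Icc (0:ℝ) 1 := by simp
  have e1 := intervalIntegral.integral_add_adjacent_intervals (hf 0 z u hu) (hf u hu 1 o)
  have e2 := intervalIntegral.integral_add_adjacent_intervals (hm 0 z u hu) (hm u hu 1 o)
  have i1 := intervalIntegral.integral_mono hu.1 (hm 0 z u hu) (hf 0 z u hu) hle
  have i2 := intervalIntegral.integral_mono hu.2 (hm u hu 1 o) (hf u hu 1 o) hle
  linarith

/-- For copulas `C, D` with derivative families `(h_v)`, `(g_w)`,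
the upper product `C ∨ D` equals the comonotonicity copula `M(v,w) = min(v,w)`,
i.e. `∫₀¹ min(h_v(t), g_w(t)) dt = min(v,w)` for all `(v,w) ∈ [0,1]²`, if and only
if `C = D` on `[0,1]²`. -/
theorem upperProduct_eq_M_iff_eq (C D h g : ℝ → ℝ → ℝ)
    (hC : IsCopula C) (hD : IsCopula D)
    (hh : IsDerivFamily C h) (hg : IsDerivFamily D g) :
    (∀ v ∈ Icc (0:ℝ) 1, ∀ w ∈ Icc (0:ℝ) 1,
        (∫ t in (0:ℝ)..1, min (h v t) (g w t)) = min v w)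
      ↔ (∀ v ∈ Icc (0:ℝ) 1, ∀ u ∈ Icc (0:ℝ) 1, C v u = D v u) := by
  obtain ⟨hm, hb, hint, hmono, htot⟩ := hh
  obtain ⟨gm, gb, gint, gmono, gtot⟩ := hg
  have z : (0:ℝ) ∈ Icc (0:ℝ) 1 := by simp
  have o : (1:ℝ) ∈ Icc (0:ℝ) 1 := by simp
  constructor
  · intro H v hv u hu
    have hI : ∀ a ∈ Icc (0:ℝ) 1, ∀ b ∈ Icc (0:ℝ) 1,
        IntervalIntegrable (fun t => min (h v t) (g v t)) volume a b := fun a ha b hb' =>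
      aux_intervalIntegrable _ ((hm v hv).min (gm v hv))
        (fun t ht => ⟨le_min (hb v hv t ht).1 (gb v hv t ht).1,
          (min_le_left _ _).trans (hb v hv t ht).2⟩) ha hb'
    have e1 := aux_sub (h v) _ u hu
      (fun a ha b hb' => aux_intervalIntegrable _ (hm v hv) (hb v hv) ha hb') hI
      (fun t => min_le_left _ _) (by rw [H v hv v hv, htot v hv, min_self])
    have e2 := aux_sub (g v) _ u hu
      (fun a ha b hb' => aux_intervalIntegrable _ (gm v hv) (gb v hv) ha hb') hI
      (fun t => min_le_right _ _) (by rw [H v hv v hv, gtot v hv, min_self])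
    rw [hint v hv u hu, gint v hv u hu, ← e1, ← e2]
  · intro H v hv w hw
    have key : ∀ v ∈ Icc (0:ℝ) 1, ∀ᵐ x, x ∈ Ioc (0:ℝ) 1 → h v x = g v x := fun v hv =>
      aux_ae_eq _ _ (aux_intervalIntegrable _ (hm v hv) (hb v hv) z o)
        (aux_intervalIntegrable _ (gm v hv) (gb v hv) z o)
        (fun u hu => by rw [← hint v hv u hu, ← gint v hv u hu, H v hv u hu])
    rcases le_total v w with hvw | hvw
    · rw [min_eq_left hvw]
      refine Eq.trans ?_ (htot v hv)
      apply intervalIntegral.integral_congr_ae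
      filter_upwards [key v hv] with x hx hx'
      rw [uIoc_of_le zero_le_one] at hx'
      rw [hx hx']
      exact min_eq_left (gmono x ⟨hx'.1.le, hx'.2⟩ hv hw hvw)
    · rw [min_eq_right hvw]
      refine Eq.trans ?_ (gtot w hw)
      apply intervalIntegral.integral_congr_ae
      filter_upwards [key w hw] with x hx hx'
      rw [uIoc_of_le zero_le_one] at hx'
      rw [← hx hx']
      exact min_eq_right (hmono x ⟨hx'.1.le, hx'.2⟩ hw hv hvw)

end
end

section
/- Let C be a bivariate copula with derivative family (h_v)_{v∈[0,1]}, and define T(C)(v,u) := ∫₀¹ min(h_v(t), u) dt for (v,u) ∈ [0,1]². Then T(C) is a bivariate copula, and for every v ∈ [0,1] the map u ↦ T(C)(v,u) is concave on [0,1]; that is, T(C) is a stochastically increasing copula. -/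
open MeasureTheory Set

noncomputable section

/-- For a copula `C` with derivative family `(h_v)`, the upper
product transform `T(C)(v,u) = ∫₀¹ min(h_v(t), u) dt` is a bivariate copula which
is stochastically increasing, i.e. `u ↦ T(C)(v,u)` is concave on `[0,1]` for every
`v ∈ [0,1]`. -/
theorem upperProductTransform_isCopula_SI (C h : ℝ → ℝ → ℝ)
    (hC : IsCopula C) (hh : IsDerivFamily C h) :
    IsCopula (fun v u => ∫ t in (0:ℝ)..1, min (h v t) u) ∧
    ∀ v ∈ Icc (0:ℝ) 1,
      ConcaveOn ℝ (Icc (0:ℝ) 1) (fun u => ∫ t in (0:ℝ)..1, min (h v t) u) := by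
  obtain ⟨hm, hr, -, hmono, hint⟩ := hh
  have I1 : ∀ v ∈ Icc (0:ℝ) 1, IntervalIntegrable (h v) volume 0 1 := by
    intro v hv
    rw [intervalIntegrable_iff_integrableOn_Icc_of_le zero_le_one]
    refine Measure.integrableOn_of_bounded (M := 1) (by simp) (hm v hv).aestronglyMeasurable ?_
    filter_upwards [ae_restrict_mem measurableSet_Icc] with t ht
    have := hr v hv t ht
    rw [Real.norm_eq_abs, abs_of_nonneg this.1]
    exact this.2
  have I2 : ∀ v ∈ Icc (0:ℝ) 1, ∀ u ∈ Icc (0:ℝ) 1,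
      IntervalIntegrable (fun t => min (h v t) u) volume 0 1 := by
    intro v hv u hu
    rw [intervalIntegrable_iff_integrableOn_Icc_of_le zero_le_one]
    refine Measure.integrableOn_of_bounded (M := 1) (by simp)
      ((hm v hv).min measurable_const).aestronglyMeasurable ?_
    filter_upwards [ae_restrict_mem measurableSet_Icc] with t ht
    have := hr v hv t ht
    rw [Real.norm_eq_abs, abs_of_nonneg (le_min this.1 hu.1)]
    exact (min_le_left _ _).trans this.2
  have nn : ∀ v ∈ Icc (0:ℝ) 1, ∀ u ∈ Icc (0:ℝ) 1, 0 ≤ ∫ t in (0:ℝ)..1, min (h v t) u := by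
    intro v hv u hu
    exact intervalIntegral.integral_nonneg zero_le_one
      (fun t ht => le_min (hr v hv t ht).1 hu.1)
  have lev : ∀ v ∈ Icc (0:ℝ) 1, ∀ u ∈ Icc (0:ℝ) 1, (∫ t in (0:ℝ)..1, min (h v t) u) ≤ v := by
    intro v hv u hu
    calc (∫ t in (0:ℝ)..1, min (h v t) u) ≤ ∫ t in (0:ℝ)..1, h v t :=
          intervalIntegral.integral_mono_on zero_le_one (I2 v hv u hu) (I1 v hv)
            (fun t _ => min_le_left _ _)
      _ = v := hint v hv
  have leu : ∀ v ∈ Icc (0:ℝ) 1, ∀ u ∈ Icc (0:ℝ) 1, (∫ t in (0:ℝ)..1, min (h v t) u) ≤ u := by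
    intro v hv u hu
    calc (∫ t in (0:ℝ)..1, min (h v t) u) ≤ ∫ t in (0:ℝ)..1, u :=
          intervalIntegral.integral_mono_on zero_le_one (I2 v hv u hu) (by simp)
            (fun t _ => min_le_right _ _)
      _ = u := by simp
  have ge : ∀ v ∈ Icc (0:ℝ) 1, ∀ u ∈ Icc (0:ℝ) 1,
      v + (u - 1) ≤ ∫ t in (0:ℝ)..1, min (h v t) u := by
    intro v hv u hu
    calc v + (u - 1) = ∫ t in (0:ℝ)..1, (h v t + (u - 1)) := by
          rw [intervalIntegral.integral_add (I1 v hv) (by simp), hint v hv]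
          simp
      _ ≤ _ := by
          refine intervalIntegral.integral_mono_on zero_le_one ((I1 v hv).add (by simp))
            (I2 v hv u hu) (fun t ht => le_min ?_ ?_)
          · linarith [hu.2]
          · linarith [(hr v hv t ht).2]
  have z : (0:ℝ) ∈ Icc (0:ℝ) 1 := by simp
  have o : (1:ℝ) ∈ Icc (0:ℝ) 1 := by simp
  refine ⟨⟨?_, ?_, ?_, ?_, ?_, ?_⟩, ?_⟩
  · exact fun v hv u hu => ⟨nn v hv u hu, (leu v hv u hu).trans hu.2⟩
  · exact fun v hv => le_antisymm (leu v hv 0 z) (nn v hv 0 z)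
  · exact fun u hu => le_antisymm (lev 0 z u hu) (nn 0 z u hu)
  · exact fun v hv => le_antisymm (lev v hv 1 o) (by have := ge v hv 1 o; linarith)
  · exact fun u hu => le_antisymm (leu 1 o u hu) (by have := ge 1 o u hu; linarith)
  · intro v₁ v₂ u₁ u₂ h0 h12 h1 k0 k12 k1
    have hv₁ : v₁ ∈ Icc (0:ℝ) 1 := ⟨h0, h12.trans h1⟩
    have hv₂ : v₂ ∈ Icc (0:ℝ) 1 := ⟨h0.trans h12, h1⟩
    have hu₁ : u₁ ∈ Icc (0:ℝ) 1 := ⟨k0, k12.trans k1⟩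
    have hu₂ : u₂ ∈ Icc (0:ℝ) 1 := ⟨k0.trans k12, k1⟩
    have key := intervalIntegral.integral_mono_on (zero_le_one (α := ℝ))
      ((I2 v₁ hv₁ u₂ hu₂).add (I2 v₂ hv₂ u₁ hu₁))
      ((I2 v₂ hv₂ u₂ hu₂).add (I2 v₁ hv₁ u₁ hu₁)) (fun t ht => by
        have hle : h v₁ t ≤ h v₂ t := hmono t ht hv₁ hv₂ h12
        simp only [min_def]
        split_ifs <;> linarith)
    rw [intervalIntegral.integral_add (I2 v₁ hv₁ u₂ hu₂) (I2 v₂ hv₂ u₁ hu₁),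
      intervalIntegral.integral_add (I2 v₂ hv₂ u₂ hu₂) (I2 v₁ hv₁ u₁ hu₁)] at key
    show 0 ≤ (∫ t in (0:ℝ)..1, min (h v₂ t) u₂) - (∫ t in (0:ℝ)..1, min (h v₁ t) u₂)
      - (∫ t in (0:ℝ)..1, min (h v₂ t) u₁) + ∫ t in (0:ℝ)..1, min (h v₁ t) u₁
    linarith
  · intro v hv
    refine ⟨convex_Icc 0 1, ?_⟩
    intro x hx y hy a b ha hb hab
    have hxy : a • x + b • y ∈ Icc (0:ℝ) 1 := convex_Icc 0 1 hx hy ha hb hab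
    have key := intervalIntegral.integral_mono_on (zero_le_one (α := ℝ))
      (((I2 v hv x hx).const_mul a).add ((I2 v hv y hy).const_mul b))
      (I2 v hv _ hxy) (fun t ht => by
        have e1 := mul_le_mul_of_nonneg_left (min_le_left (h v t) x) ha
        have e2 := mul_le_mul_of_nonneg_left (min_le_left (h v t) y) hb
        have e3 := mul_le_mul_of_nonneg_left (min_le_right (h v t) x) ha
        have e4 := mul_le_mul_of_nonneg_left (min_le_right (h v t) y) hb
        have e5 : a * h v t + b * h v t = h v t := by rw [← add_mul, hab, one_mul]
        refine le_min ?_ ?_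
        · linarith
        · simp only [smul_eq_mul]
          linarith)
    rw [intervalIntegral.integral_add ((I2 v hv x hx).const_mul a)
      ((I2 v hv y hy).const_mul b), intervalIntegral.integral_const_mul,
      intervalIntegral.integral_const_mul] at key
    exact key

end
end

section
/- Let h : [0,1] → [0,1] be Lebesgue-measurable and define g(u) := ∫₀¹ min(h(t), u) dt for u ∈ [0,1]. Then for every u ∈ [0,1), the right derivative of g at u exists and equals λ({t ∈ [0,1] : h(t) > u}); that is, lim_{ε→0⁺} (g(u+ε) − g(u))/ε = λ({t ∈ [0,1] : h(t) > u}), where λ is Lebesgue measure on [0,1]. -/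
open MeasureTheory Set Filter

noncomputable section

/-- Let `h : [0,1] → [0,1]` be Lebesgue measurable and
`g(u) = ∫₀¹ min(h(t), u) dt`. Then for every `u ∈ [0,1)` the right derivative of
`g` at `u` exists and equals `λ({t ∈ [0,1] : h(t) > u})`. -/
theorem rightDeriv_upperProduct (h : ℝ → ℝ)
    (hmeas : Measurable h)
    (hrange : ∀ t ∈ Icc (0:ℝ) 1, h t ∈ Icc (0:ℝ) 1) :
    ∀ u ∈ Ico (0:ℝ) 1,
      Tendsto
        (fun ε : ℝ =>
          ((∫ t in (0:ℝ)..1, min (h t) (u + ε)) - ∫ t in (0:ℝ)..1, min (h t) u) / ε)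
        (nhdsWithin 0 (Ioi 0))
        (nhds ((volume {t ∈ Icc (0:ℝ) 1 | u < h t}).toReal)) := by
  intro u hu
  have hint : ∀ c : ℝ, Integrable (fun t => min (h t) c) (volume.restrict (Icc (0:ℝ) 1)) := by
    intro c
    refine Integrable.mono' (integrable_const (1 + |c|))
      (hmeas.min measurable_const).aestronglyMeasurable ?_
    filter_upwards [ae_restrict_mem measurableSet_Icc] with t ht
    obtain ⟨h0, h1⟩ := hrange t ht
    rw [Real.norm_eq_abs, abs_le]
    have := neg_abs_le c
    have := abs_nonneg c
    constructor
    · exact le_min (by linarith) (by linarith)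
    · exact (min_le_left _ _).trans (by linarith)
  have hS : MeasurableSet {t | u < h t} := measurableSet_lt measurable_const hmeas
  have hlim : (volume {t ∈ Icc (0:ℝ) 1 | u < h t}).toReal
      = ∫ t in Icc (0:ℝ) 1, indicator {t | u < h t} (fun _ => (1:ℝ)) t := by
    rw [integral_indicator hS, setIntegral_const, measureReal_restrict_apply hS, smul_eq_mul,
      mul_one, Measure.real, inter_comm]
    rfl
  have heq : ∀ ε : ℝ,
      ((∫ t in (0:ℝ)..1, min (h t) (u + ε)) - ∫ t in (0:ℝ)..1, min (h t) u) / ε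
      = ∫ t in Icc (0:ℝ) 1, (min (h t) (u + ε) - min (h t) u) / ε := by
    intro ε
    rw [integral_div, integral_sub (hint _) (hint _), intervalIntegral.integral_of_le zero_le_one,
      intervalIntegral.integral_of_le zero_le_one, integral_Icc_eq_integral_Ioc,
      integral_Icc_eq_integral_Ioc]
  rw [hlim]
  simp_rw [heq]
  refine tendsto_integral_filter_of_dominated_convergence (fun _ => (1:ℝ)) ?_ ?_
    (integrable_const _) ?_
  · exact Eventually.of_forall fun ε => (((hint _).sub (hint _)).div_const ε).aestronglyMeasurable
  · filter_upwards [self_mem_nhdsWithin] with ε hε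
    have hε : 0 < ε := hε
    refine Eventually.of_forall fun t => ?_
    rw [Real.norm_eq_abs, abs_le, le_div_iff₀ hε, div_le_iff₀ hε]
    constructor <;> rcases min_cases (h t) (u + ε) with a | a <;>
      rcases min_cases (h t) u with b | b <;> linarith
  · refine Eventually.of_forall fun t => ?_
    refine tendsto_const_nhds.congr' ?_
    by_cases ht : u < h t
    · have : Ioo (0:ℝ) (h t - u) ∈ nhdsWithin (0:ℝ) (Ioi 0) :=
        Ioo_mem_nhdsGT (by linarith)
      filter_upwards [this] with ε hε
      rw [indicator_of_mem (by exact ht), min_eq_right (by linarith [hε.2]), min_eq_right ht.le,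
        add_sub_cancel_left, div_self hε.1.ne']
    · filter_upwards [self_mem_nhdsWithin] with ε hε
      have hε : 0 < ε := hε
      rw [indicator_of_notMem (by exact ht), min_eq_left (by linarith), min_eq_left (by linarith),
        sub_self, zero_div]

end
end

section
/- Let h : [0,1] → [0,1] be Lebesgue-measurable and let f : [0,1] → [0,1] be decreasing, right-continuous, and equimeasurable with h, i.e. λ({t : f(t) ≤ y}) = λ({t : h(t) ≤ y}) for every y ∈ [0,1]. Then for every u ∈ [0,1], ∫₀ᵘ f⁻¹(s) ds = ∫₀¹ min(h(t), u) dt, where f⁻¹(s) := inf{t ∈ [0,1] : f(t) ≤ s} (inf ∅ = 1). -/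
open MeasureTheory Set

noncomputable section

/-- Generalized inverse of a decreasing function `f : [0,1] → [0,1]`:
`f⁻¹(w) = inf {t ∈ [0,1] | f t ≤ w}`, with the convention `inf ∅ = 1`. -/
def geninv (f : ℝ → ℝ) (w : ℝ) : ℝ :=
  sInf (insert (1:ℝ) {t ∈ Icc (0:ℝ) 1 | f t ≤ w})

theorem geninv_eq_aux (h f : ℝ → ℝ)
    (hmeas : Measurable h)
    (fdec : AntitoneOn f (Icc (0:ℝ) 1))
    (fequi : ∀ y ∈ Icc (0:ℝ) 1,
      volume {t ∈ Icc (0:ℝ) 1 | f t ≤ y} = volume {t ∈ Icc (0:ℝ) 1 | h t ≤ y})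
    (s : ℝ) (hs : s ∈ Icc (0:ℝ) 1) :
    geninv f s = (volume.restrict (Icc (0:ℝ) 1)).real {t | s < h t} := by
  have hbdd : BddBelow (insert (1:ℝ) {t ∈ Icc (0:ℝ) 1 | f t ≤ s}) := by
    refine ⟨0, ?_⟩
    rintro x (rfl | hx)
    · exact zero_le_one
    · exact hx.1.1
  have hle1 : geninv f s ≤ 1 := csInf_le hbdd (mem_insert _ _)
  have hge0 : 0 ≤ geninv f s := by
    refine le_csInf ⟨1, mem_insert _ _⟩ ?_
    rintro x (rfl | hx)
    · exact zero_le_one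
    · exact hx.1.1
  have hsub1 : {t ∈ Icc (0:ℝ) 1 | f t ≤ s} ⊆ Icc (geninv f s) 1 := fun x hx =>
    ⟨csInf_le hbdd (mem_insert_of_mem _ hx), hx.1.2⟩
  have hsub2 : Ioo (geninv f s) 1 ⊆ {t ∈ Icc (0:ℝ) 1 | f t ≤ s} := by
    intro x hx
    obtain ⟨y, hy, hyx⟩ := exists_lt_of_csInf_lt ⟨1, mem_insert _ _⟩ hx.1
    have hx01 : x ∈ Icc (0:ℝ) 1 := ⟨hge0.trans hx.1.le, hx.2.le⟩
    rcases hy with rfl | hy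
    · exact absurd hx.2 (not_lt.mpr hyx.le)
    · exact ⟨hx01, (fdec hy.1 hx01 hyx.le).trans hy.2⟩
  have hvol : volume {t ∈ Icc (0:ℝ) 1 | f t ≤ s} = ENNReal.ofReal (1 - geninv f s) := by
    apply le_antisymm
    · simpa using measure_mono (μ := volume) hsub1
    · simpa using measure_mono (μ := volume) hsub2
  rw [fequi s hs] at hvol
  have hms : MeasurableSet {t | h t ≤ s} := measurableSet_le hmeas measurable_const
  have hc : {t | s < h t} = {t | h t ≤ s}ᶜ := by ext; simp
  have h1 : (volume.restrict (Icc (0:ℝ) 1)).real {t | h t ≤ s} = 1 - geninv f s := by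
    have he : {t | h t ≤ s} ∩ Icc (0:ℝ) 1 = {t ∈ Icc (0:ℝ) 1 | h t ≤ s} := by
      ext; simp [and_comm]
    rw [Measure.real, Measure.restrict_apply hms, he, hvol, ENNReal.toReal_ofReal (by linarith)]
  rw [hc, measureReal_compl hms, h1]
  simp [Measure.real]

/-- Let `h : [0,1] → [0,1]` be measurable and `f : [0,1] → [0,1]`
be decreasing, right-continuous and equimeasurable with `h`. Then
`∫₀ᵘ f⁻¹(s) ds = ∫₀¹ min(h(t), u) dt` for every `u ∈ [0,1]`. -/
theorem integral_geninv_eq_integral_min (h f : ℝ → ℝ)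
    (hmeas : Measurable h)
    (hrange : ∀ t ∈ Icc (0:ℝ) 1, h t ∈ Icc (0:ℝ) 1)
    (frange : ∀ t ∈ Icc (0:ℝ) 1, f t ∈ Icc (0:ℝ) 1)
    (fdec : AntitoneOn f (Icc (0:ℝ) 1))
    (frc : ∀ t ∈ Ico (0:ℝ) 1, ContinuousWithinAt f (Icc t 1) t)
    (fequi : ∀ y ∈ Icc (0:ℝ) 1,
      volume {t ∈ Icc (0:ℝ) 1 | f t ≤ y} = volume {t ∈ Icc (0:ℝ) 1 | h t ≤ y}) :
    ∀ u ∈ Icc (0:ℝ) 1,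
      (∫ s in (0:ℝ)..u, geninv f s) = ∫ t in (0:ℝ)..1, min (h t) u := by
  intro u hu
  have hint : Integrable (fun t => min (h t) u) (volume.restrict (Icc (0:ℝ) 1)) := by
    refine Measure.integrableOn_of_bounded (M := 1) (by simp)
      (hmeas.min measurable_const).aestronglyMeasurable ?_
    filter_upwards [ae_restrict_mem measurableSet_Icc] with t ht
    have := hrange t ht
    rw [Real.norm_eq_abs, abs_of_nonneg (le_min this.1 hu.1)]
    exact (min_le_right _ _).trans hu.2
  have hnn : 0 ≤ᵐ[volume.restrict (Icc (0:ℝ) 1)] (fun t => min (h t) u) := by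
    filter_upwards [ae_restrict_mem measurableSet_Icc] with t ht
    exact le_min (hrange t ht).1 hu.1
  rw [intervalIntegral.integral_of_le hu.1, intervalIntegral.integral_of_le zero_le_one,
    ← integral_Icc_eq_integral_Ioc (x := (0:ℝ)) (y := 1),
    hint.integral_eq_integral_meas_lt hnn, integral_Ioc_eq_integral_Ioo]
  have hz : ∫ t in Ioi (0:ℝ), (volume.restrict (Icc (0:ℝ) 1)).real {a | t < min (h a) u}
      = ∫ t in Ioo (0:ℝ) u, (volume.restrict (Icc (0:ℝ) 1)).real {a | t < min (h a) u} := by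
    refine setIntegral_eq_of_subset_of_forall_diff_eq_zero measurableSet_Ioi
      (fun x hx => hx.1) ?_
    intro x hx
    have hux : u ≤ x := by
      by_contra hlt
      exact hx.2 ⟨hx.1, not_le.mp hlt⟩
    have : {a | x < min (h a) u} = ∅ := by
      ext a
      simp [hux]
    rw [this]
    simp
  rw [hz]
  refine setIntegral_congr_fun measurableSet_Ioo ?_
  intro s hs
  have : {a | s < min (h a) u} = {a | s < h a} := by
    ext a
    simp [hs.2]
  simp only [this]
  exact geninv_eq_aux h f hmeas fdec fequi s ⟨hs.1.le, hs.2.le.trans hu.2⟩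

end
end

section
/- Let f, g : [0,1] → [0,1] be decreasing and right-continuous. Then ∫₀¹ |f(x) − g(x)| dx = ∫₀¹ |f⁻¹(y) − g⁻¹(y)| dy, where f⁻¹(w) := inf{t ∈ [0,1] : f(t) ≤ w} and g⁻¹(w) := inf{t ∈ [0,1] : g(t) ≤ w} (with inf ∅ = 1). -/
open MeasureTheory Set

noncomputable section

theorem geninv_mem (f : ℝ → ℝ) (y : ℝ) : geninv f y ∈ Icc (0:ℝ) 1 := by
  have hb : ∀ t ∈ insert (1:ℝ) {t ∈ Icc (0:ℝ) 1 | f t ≤ y}, 0 ≤ t := by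
    rintro t (rfl | ht)
    · norm_num
    · exact ht.1.1
  exact ⟨le_csInf ⟨1, mem_insert _ _⟩ hb, csInf_le ⟨0, hb⟩ (mem_insert _ _)⟩

theorem lt_geninv_iff (f : ℝ → ℝ) (fdec : AntitoneOn f (Icc (0:ℝ) 1))
    (frc : ∀ t ∈ Ico (0:ℝ) 1, ContinuousWithinAt f (Icc t 1) t)
    (x y : ℝ) (hx : x ∈ Ico (0:ℝ) 1) : x < geninv f y ↔ y < f x := by
  have hb : ∀ t ∈ insert (1:ℝ) {t ∈ Icc (0:ℝ) 1 | f t ≤ y}, 0 ≤ t := by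
    rintro t (rfl | ht)
    · norm_num
    · exact ht.1.1
  constructor
  · intro h
    by_contra! hc
    exact absurd (csInf_le ⟨0, hb⟩ (mem_insert_of_mem _ ⟨⟨hx.1, hx.2.le⟩, hc⟩)) (not_le.2 h)
  · intro h
    have h1 : ∀ᶠ t in nhdsWithin x (Icc x 1), y < f t := (frc x hx).eventually_const_lt h
    rw [nhdsWithin_Icc_eq_nhdsGE hx.2] at h1
    obtain ⟨u, hu, hu'⟩ := (mem_nhdsGE_iff_exists_Ico_subset' hx.2).1 h1
    have hxu : x < u := hu
    refine lt_of_lt_of_le (lt_min hxu hx.2) (le_csInf ⟨1, mem_insert _ _⟩ ?_)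
    rintro t (rfl | ht)
    · exact min_le_right _ _
    · by_contra! hc
      have htu := (lt_min_iff.1 hc).1
      rcases le_total x t with hxt | hxt
      · exact absurd (hu' ⟨hxt, htu⟩) (not_lt.2 ht.2)
      · exact absurd (fdec ht.1 ⟨hx.1, hx.2.le⟩ hxt) (not_le.2 (lt_of_le_of_lt ht.2 h))

theorem integral_layer_aux (a b : ℝ) (ha : a ∈ Icc (0:ℝ) 1) (hb : b ∈ Icc (0:ℝ) 1) (hab : a ≤ b) :
    ∫ y in Ico (0:ℝ) 1, |(if y < a then (1:ℝ) else 0) - (if y < b then 1 else 0)| = |a - b| := by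
  have : (fun y : ℝ => |(if y < a then (1:ℝ) else 0) - (if y < b then 1 else 0)|)
      = (Ico a b).indicator (fun _ => (1:ℝ)) := by
    funext y
    simp only [indicator, mem_Ico]
    split_ifs <;> norm_num <;> grind
  rw [this, setIntegral_indicator measurableSet_Ico,
    inter_eq_right.2 (Ico_subset_Ico ha.1 hb.2), setIntegral_const]
  simp [hab, abs_sub_comm a b, abs_of_nonneg]

theorem integral_layer (a b : ℝ) (ha : a ∈ Icc (0:ℝ) 1) (hb : b ∈ Icc (0:ℝ) 1) :
    ∫ y in Ico (0:ℝ) 1, |(if y < a then (1:ℝ) else 0) - (if y < b then 1 else 0)| = |a - b| := by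
  rcases le_total a b with h | h
  · exact integral_layer_aux a b ha hb h
  · rw [abs_sub_comm a b, ← integral_layer_aux b a hb ha h]
    simp only [abs_sub_comm]

theorem exists_measurable_ext (f : ℝ → ℝ) (fdec : AntitoneOn f (Icc (0:ℝ) 1)) :
    ∃ F : ℝ → ℝ, Measurable F ∧ ∀ x ∈ Icc (0:ℝ) 1, F x = f x := by
  refine ⟨fun x => f (projIcc 0 1 zero_le_one x), ?_, ?_⟩
  · apply Antitone.measurable
    intro x y hxy
    exact fdec (projIcc 0 1 zero_le_one x).2 (projIcc 0 1 zero_le_one y).2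
      (monotone_projIcc _ hxy)
  · intro x hx
    simp only [projIcc_of_mem zero_le_one hx]

/-- For decreasing, right-continuous `f, g : [0,1] → [0,1]`,
`∫₀¹ |f(x) − g(x)| dx = ∫₀¹ |f⁻¹(y) − g⁻¹(y)| dy`, where `f⁻¹, g⁻¹` are the
generalized inverses (with `inf ∅ = 1`). -/
theorem integral_abs_sub_eq_integral_abs_sub_geninv (f g : ℝ → ℝ)
    (frange : ∀ t ∈ Icc (0:ℝ) 1, f t ∈ Icc (0:ℝ) 1)
    (grange : ∀ t ∈ Icc (0:ℝ) 1, g t ∈ Icc (0:ℝ) 1)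
    (fdec : AntitoneOn f (Icc (0:ℝ) 1))
    (gdec : AntitoneOn g (Icc (0:ℝ) 1))
    (frc : ∀ t ∈ Ico (0:ℝ) 1, ContinuousWithinAt f (Icc t 1) t)
    (grc : ∀ t ∈ Ico (0:ℝ) 1, ContinuousWithinAt g (Icc t 1) t) :
    (∫ x in (0:ℝ)..1, |f x - g x|) = ∫ y in (0:ℝ)..1, |geninv f y - geninv g y| := by
  obtain ⟨F, hF, hFf⟩ := exists_measurable_ext f fdec
  obtain ⟨G, hG, hGg⟩ := exists_measurable_ext g gdec
  rw [intervalIntegral.integral_of_le zero_le_one, intervalIntegral.integral_of_le zero_le_one,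
    integral_Ioc_eq_integral_Ioo, integral_Ioc_eq_integral_Ioo,
    ← integral_Ico_eq_integral_Ioo, ← integral_Ico_eq_integral_Ioo]
  have e1 : ∫ x in Ico (0:ℝ) 1, |f x - g x| = ∫ x in Ico (0:ℝ) 1, ∫ y in Ico (0:ℝ) 1,
      |(if y < F x then (1:ℝ) else 0) - (if y < G x then 1 else 0)| := by
    refine setIntegral_congr_fun measurableSet_Ico fun x hx => ?_
    have hx' : x ∈ Icc (0:ℝ) 1 := ⟨hx.1, hx.2.le⟩
    simp only [hFf x hx', hGg x hx']
    exact (integral_layer _ _ (frange x hx') (grange x hx')).symm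
  have e2 : ∫ y in Ico (0:ℝ) 1, |geninv f y - geninv g y| =
      ∫ y in Ico (0:ℝ) 1, ∫ x in Ico (0:ℝ) 1,
      |(if y < F x then (1:ℝ) else 0) - (if y < G x then 1 else 0)| := by
    refine setIntegral_congr_fun measurableSet_Ico fun y hy => ?_
    rw [← integral_layer _ _ (geninv_mem f y) (geninv_mem g y)]
    refine setIntegral_congr_fun measurableSet_Ico fun x hx => ?_
    have hx' : x ∈ Icc (0:ℝ) 1 := ⟨hx.1, hx.2.le⟩
    simp only [hFf x hx', hGg x hx', lt_geninv_iff f fdec frc x y hx,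
      lt_geninv_iff g gdec grc x y hx]
  rw [e1, e2]
  apply integral_integral_swap
  refine Integrable.of_bound (C := 1) (Measurable.aestronglyMeasurable ?_) ?_
  · have m : ∀ H : ℝ → ℝ, Measurable H →
        Measurable (fun p : ℝ × ℝ => if p.2 < H p.1 then (1:ℝ) else 0) := fun H hH =>
      Measurable.ite (measurableSet_lt measurable_snd (hH.comp measurable_fst))
        measurable_const measurable_const
    exact continuous_abs.measurable.comp ((m F hF).sub (m G hG))
  · refine Filter.Eventually.of_forall fun p => ?_
    simp only [Function.uncurry]
    split_ifs <;> norm_num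

end
end

section
/- A bivariate copula D is stochastically increasing (i.e. u ↦ D(v,u) is concave on [0,1] for every v ∈ [0,1]) if and only if there exist a bivariate copula C and a derivative family (h_v)_{v∈[0,1]} for C such that D(v,u) = ∫₀¹ min(h_v(t), u) dt for all (v,u) ∈ [0,1]². In other words, the class of upper products C ∨ Π of copulas with the independence copula coincides with the class of stochastically increasing copulas. -/
open MeasureTheory Set

noncomputable section

lemma aux_deriv_le {f₁ f₂ : ℝ → ℝ} {a b x : ℝ} (hx : x < 1)
    (h₁ : HasDerivWithinAt f₁ a (Ioi x) x) (h₂ : HasDerivWithinAt f₂ b (Ioi x) x)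
    (h : ∀ y, x < y → y < 1 → f₁ y - f₁ x ≤ f₂ y - f₂ x) : a ≤ b := by
  have t₁ := (hasDerivWithinAt_iff_tendsto_slope' self_notMem_Ioi).mp h₁
  have t₂ := (hasDerivWithinAt_iff_tendsto_slope' self_notMem_Ioi).mp h₂
  refine le_of_tendsto_of_tendsto t₁ t₂ ?_
  simp_rw [Filter.EventuallyLE, eventually_nhdsWithin_iff, slope_def_field]
  filter_upwards [eventually_lt_nhds hx] with y hy (hy' : x < y)
  have : 0 < y - x := by linarith
  have := h y hy' hy
  gcongr

lemma aux_min {g : ℝ → ℝ} (hg : AntitoneOn g (Ioo 0 1)) {u : ℝ} (hu : u ∈ Icc (0:ℝ) 1) (t : ℝ) :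
    volume.real ({s | t ≤ g s} ∩ Ioo 0 u) = min (volume.real ({s | t ≤ g s} ∩ Ioo 0 1)) u := by
  obtain ⟨hu0, hu1⟩ := hu
  have fin : ∀ w : ℝ, volume ({s | t ≤ g s} ∩ Ioo 0 w) ≠ ⊤ := fun w =>
    measure_ne_top_of_subset inter_subset_right (by simp)
  have hI : volume.real (Ioo 0 u) = u := by simp [Measure.real, hu0]
  have hle : volume.real ({s | t ≤ g s} ∩ Ioo 0 u) ≤ volume.real ({s | t ≤ g s} ∩ Ioo 0 1) :=
    measureReal_mono (inter_subset_inter_right _ (Ioo_subset_Ioo_right hu1)) (fin 1)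
  by_cases hS : ∃ s ∈ Ioo (0:ℝ) 1, u ≤ s ∧ t ≤ g s
  · obtain ⟨s, hs, hus, hts⟩ := hS
    have : {s | t ≤ g s} ∩ Ioo 0 u = Ioo 0 u := by
      apply inter_eq_right.mpr
      intro r hr
      exact hts.trans (hg ⟨hr.1, hr.2.trans_le hu1⟩ hs (hr.2.le.trans hus))
    rw [this, hI] at hle ⊢
    exact (min_eq_right hle).symm
  · push Not at hS
    have : {s | t ≤ g s} ∩ Ioo 0 1 = {s | t ≤ g s} ∩ Ioo 0 u := by
      ext s
      constructor
      · rintro ⟨h1, h2⟩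
        refine ⟨h1, h2.1, ?_⟩
        by_contra hc
        exact absurd (hS s h2 (not_lt.mp hc)) (not_lt.mpr h1)
      · rintro ⟨h1, h2⟩
        exact ⟨h1, h2.1, h2.2.trans_le hu1⟩
    rw [this, min_eq_left]
    exact (measureReal_mono inter_subset_right (by simp)).trans hI.le

lemma aux_int {g : ℝ → ℝ} (hg : AntitoneOn g (Ioo 0 1)) (hb : ∀ s ∈ Ioo (0:ℝ) 1, g s ∈ Icc (0:ℝ) 1)
    {u : ℝ} (hu : u ∈ Icc (0:ℝ) 1) : IntegrableOn g (Ioo 0 u) := by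
  have hsub : Ioo (0:ℝ) u ⊆ Ioo 0 1 := Ioo_subset_Ioo_right hu.2
  refine Integrable.of_bound
    (aemeasurable_restrict_of_antitoneOn measurableSet_Ioo (hg.mono hsub)).aestronglyMeasurable 1 ?_
  refine (ae_restrict_iff' measurableSet_Ioo).2 (Filter.Eventually.of_forall fun s hs => ?_)
  have := hb s (hsub hs)
  rw [Real.norm_eq_abs, abs_le]
  exact ⟨by linarith [this.1], this.2⟩

lemma aux_layer {g : ℝ → ℝ} (hg : AntitoneOn g (Ioo 0 1))
    (hb : ∀ s ∈ Ioo (0:ℝ) 1, g s ∈ Icc (0:ℝ) 1) {u : ℝ} (hu : u ∈ Icc (0:ℝ) 1) :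
    ∫ s in (0:ℝ)..u, g s
      = ∫ t in (0:ℝ)..1, min (volume.real ({s | t ≤ g s} ∩ Ioo 0 1)) u := by
  have hsub : Ioo (0:ℝ) u ⊆ Ioo 0 1 := Ioo_subset_Ioo_right hu.2
  rw [intervalIntegral.integral_of_le hu.1, intervalIntegral.integral_of_le zero_le_one,
    integral_Ioc_eq_integral_Ioo,
    Integrable.integral_eq_integral_Ioc_meas_le (M := 1) (aux_int hg hb hu)]
  · refine integral_congr_ae (Filter.Eventually.of_forall fun t => ?_)
    simp only
    rw [← aux_min hg hu, Measure.real, Measure.real, Measure.restrict_apply' measurableSet_Ioo]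
  · exact (ae_restrict_iff' measurableSet_Ioo).2
      (Filter.Eventually.of_forall fun s hs => (hb s (hsub hs)).1)
  · exact (ae_restrict_iff' measurableSet_Ioo).2
      (Filter.Eventually.of_forall fun s hs => (hb s (hsub hs)).2)

lemma aux_ii {f : ℝ → ℝ} (hm : Measurable f) (hb : ∀ t ∈ Icc (0:ℝ) 1, f t ∈ Icc (0:ℝ) 1)
    {a b : ℝ} (ha : 0 ≤ a) (hab : a ≤ b) (hb1 : b ≤ 1) : IntervalIntegrable f volume a b := by
  rw [intervalIntegrable_iff_integrableOn_Ioc_of_le hab]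
  refine Measure.integrableOn_of_bounded (M := 1) (by simp) hm.aestronglyMeasurable ?_
  refine (ae_restrict_iff' measurableSet_Ioc).2 (Filter.Eventually.of_forall fun s hs => ?_)
  have := hb s ⟨ha.trans hs.1.le, hs.2.trans hb1⟩
  rw [Real.norm_eq_abs, abs_le]
  exact ⟨by linarith [this.1], this.2⟩

lemma aux_bounds {f : ℝ → ℝ} (hm : Measurable f) (hb : ∀ t ∈ Icc (0:ℝ) 1, f t ∈ Icc (0:ℝ) 1)
    {a b : ℝ} (ha : 0 ≤ a) (hab : a ≤ b) (hb1 : b ≤ 1) :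
    0 ≤ ∫ t in a..b, f t ∧ ∫ t in a..b, f t ≤ b - a := by
  constructor
  · exact intervalIntegral.integral_nonneg hab
      fun t ht => (hb t ⟨ha.trans ht.1, ht.2.trans hb1⟩).1
  · have := intervalIntegral.integral_mono_on hab (aux_ii hm hb ha hab hb1)
      (intervalIntegrable_const (c := (1:ℝ)))
      fun t ht => (hb t ⟨ha.trans ht.1, ht.2.trans hb1⟩).2
    simpa using this

lemma aux_copula {h : ℝ → ℝ → ℝ}
    (hm : ∀ v ∈ Icc (0:ℝ) 1, Measurable (h v))
    (hb : ∀ v ∈ Icc (0:ℝ) 1, ∀ t ∈ Icc (0:ℝ) 1, h v t ∈ Icc (0:ℝ) 1)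
    (hmono : ∀ t ∈ Icc (0:ℝ) 1, MonotoneOn (fun v => h v t) (Icc (0:ℝ) 1))
    (hint : ∀ v ∈ Icc (0:ℝ) 1, (∫ t in (0:ℝ)..1, h v t) = v) :
    IsCopula (fun v u => ∫ t in (0:ℝ)..u, h v t) := by
  have add : ∀ v ∈ Icc (0:ℝ) 1, ∀ a b : ℝ, 0 ≤ a → a ≤ b → b ≤ 1 →
      (∫ t in (0:ℝ)..a, h v t) + ∫ t in a..b, h v t = ∫ t in (0:ℝ)..b, h v t :=
    fun v hv a b ha hab hb1 => intervalIntegral.integral_add_adjacent_intervals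
      (aux_ii (hm v hv) (hb v hv) le_rfl ha (hab.trans hb1))
      (aux_ii (hm v hv) (hb v hv) ha hab hb1)
  have z : (0:ℝ) ∈ Icc (0:ℝ) 1 := by simp
  have o : (1:ℝ) ∈ Icc (0:ℝ) 1 := by simp
  refine ⟨?_, ?_, ?_, hint, ?_, ?_⟩
  · intro v hv u hu
    have := aux_bounds (hm v hv) (hb v hv) le_rfl hu.1 hu.2
    exact ⟨this.1, by linarith [this.2, hu.2]⟩
  · intro v hv
    simp
  · intro u hu
    have h1 := aux_bounds (hm 0 z) (hb 0 z) le_rfl hu.1 hu.2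
    have h2 := aux_bounds (hm 0 z) (hb 0 z) hu.1 hu.2 le_rfl
    have h3 := add 0 z u 1 hu.1 hu.2 le_rfl
    have h4 := hint 0 z
    show (∫ t in (0:ℝ)..u, h 0 t) = 0
    linarith [h1.1, h2.1]
  · intro u hu
    have h1 := aux_bounds (hm 1 o) (hb 1 o) le_rfl hu.1 hu.2
    have h2 := aux_bounds (hm 1 o) (hb 1 o) hu.1 hu.2 le_rfl
    have h3 := add 1 o u 1 hu.1 hu.2 le_rfl
    have h4 := hint 1 o
    show (∫ t in (0:ℝ)..u, h 1 t) = u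
    linarith [h1.2, h2.2]
  · intro v₁ v₂ u₁ u₂ hv1 hv hv2 hu1 hu hu2
    have m1 : v₁ ∈ Icc (0:ℝ) 1 := ⟨hv1, hv.trans hv2⟩
    have m2 : v₂ ∈ Icc (0:ℝ) 1 := ⟨hv1.trans hv, hv2⟩
    have h1 := add v₁ m1 u₁ u₂ hu1 hu hu2
    have h2 := add v₂ m2 u₁ u₂ hu1 hu hu2
    have h3 : ∫ t in u₁..u₂, h v₁ t ≤ ∫ t in u₁..u₂, h v₂ t :=
      intervalIntegral.integral_mono_on hu (aux_ii (hm _ m1) (hb _ m1) hu1 hu hu2)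
        (aux_ii (hm _ m2) (hb _ m2) hu1 hu hu2)
        fun t ht => hmono t ⟨hu1.trans ht.1, ht.2.trans hu2⟩ m1 m2 hv
    simp only
    linarith

lemma aux_forward (D : ℝ → ℝ → ℝ) (hD : IsCopula D)
    (hc : ∀ v ∈ Icc (0:ℝ) 1, ConcaveOn ℝ (Icc (0:ℝ) 1) (fun u => D v u)) :
    ∃ C h : ℝ → ℝ → ℝ, IsCopula C ∧ IsDerivFamily C h ∧
          ∀ v ∈ Icc (0:ℝ) 1, ∀ u ∈ Icc (0:ℝ) 1,
            D v u = ∫ t in (0:ℝ)..1, min (h v t) u := by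
  obtain ⟨hD1, hD2, hD3, hD4, hD5, hD6⟩ := hD
  have z : (0:ℝ) ∈ Icc (0:ℝ) 1 := by simp
  have o : (1:ℝ) ∈ Icc (0:ℝ) 1 := by simp
  have hI : ∀ x ∈ Ioo (0:ℝ) 1, x ∈ interior (Icc (0:ℝ) 1) := fun x hx => by
    rwa [interior_Icc]
  set g : ℝ → ℝ → ℝ := fun v s => derivWithin (D v) (Ioi s) s with hgdef
  have hder : ∀ v ∈ Icc (0:ℝ) 1, ∀ s ∈ Ioo (0:ℝ) 1, HasDerivWithinAt (D v) (g v s) (Ioi s) s := by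
    intro v hv s hs
    have := (hc v hv).neg.differentiableWithinAt_Ioi_of_mem_interior (hI s hs)
    have h2 := this.neg
    simp only [neg_neg] at h2
    have h3 : DifferentiableWithinAt ℝ (D v) (Ioi s) s := by
      convert h2 using 1
    exact h3.hasDerivWithinAt
  have hcmp : ∀ v ∈ Icc (0:ℝ) 1, ∀ w ∈ Icc (0:ℝ) 1, v ≤ w → ∀ s ∈ Ioo (0:ℝ) 1,
      g v s ≤ g w s := by
    intro v hv w hw hvw s hs
    refine aux_deriv_le hs.2 (hder v hv s hs) (hder w hw s hs) fun y hy hy1 => ?_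
    have := hD6 v w s y hv.1 hvw hw.2 hs.1.le hy.le hy1.le
    linarith
  have hb : ∀ v ∈ Icc (0:ℝ) 1, ∀ s ∈ Ioo (0:ℝ) 1, g v s ∈ Icc (0:ℝ) 1 := by
    intro v hv s hs
    constructor
    · refine aux_deriv_le hs.2 (hasDerivWithinAt_const s (Ioi s) (0:ℝ)) (hder v hv s hs)
        fun y hy hy1 => ?_
      have := hD6 0 v s y le_rfl hv.1 hv.2 hs.1.le hy.le hy1.le
      rw [hD3 s ⟨hs.1.le, hs.2.le⟩, hD3 y ⟨hs.1.le.trans hy.le, hy1.le⟩] at this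
      linarith
    · refine aux_deriv_le hs.2 (hder v hv s hs) (hasDerivWithinAt_id s (Ioi s))
        fun y hy hy1 => ?_
      have := hD6 v 1 s y hv.1 hv.2 le_rfl hs.1.le hy.le hy1.le
      rw [hD5 s ⟨hs.1.le, hs.2.le⟩, hD5 y ⟨hs.1.le.trans hy.le, hy1.le⟩] at this
      simp only [id]
      linarith
  have hanti : ∀ v ∈ Icc (0:ℝ) 1, AntitoneOn (g v) (Ioo 0 1) := by
    intro v hv x hx y hy hxy
    have hm := (hc v hv).neg.monotoneOn_rightDeriv (hI x hx) (hI y hy) hxy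
    have e : ∀ s ∈ Ioo (0:ℝ) 1, derivWithin (-fun u => D v u) (Ioi s) s = - g v s := fun s hs =>
      (hder v hv s hs).neg.derivWithin (uniqueDiffWithinAt_Ioi s)
    simp only [e x hx, e y hy] at hm
    linarith
  have hcont : ∀ v ∈ Icc (0:ℝ) 1, ContinuousOn (D v) (Icc 0 1) := by
    intro v hv
    have : LipschitzOnWith 1 (D v) (Icc 0 1) := by
      apply LipschitzOnWith.of_le_add_mul
      intro x hx y hy
      simp only [NNReal.coe_one, one_mul]
      rcases le_total x y with hxy | hxy
      · have := hD6 0 v x y le_rfl hv.1 hv.2 hx.1 hxy hy.2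
        rw [hD3 x hx, hD3 y hy] at this
        linarith [dist_nonneg (x := x) (y := y)]
      · have := hD6 v 1 y x hv.1 hv.2 le_rfl hy.1 hxy hx.2
        rw [hD5 x hx, hD5 y hy] at this
        rw [Real.dist_eq]
        linarith [le_abs_self (x - y)]
    exact this.continuousOn
  have hftc : ∀ v ∈ Icc (0:ℝ) 1, ∀ u ∈ Icc (0:ℝ) 1, ∫ s in (0:ℝ)..u, g v s = D v u := by
    intro v hv u hu
    rw [intervalIntegral.integral_eq_sub_of_hasDeriv_right_of_le hu.1
      ((hcont v hv).mono (Icc_subset_Icc_right hu.2))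
      (fun s hs => hder v hv s ⟨hs.1, hs.2.trans_le hu.2⟩), hD2 v hv, sub_zero]
    rw [intervalIntegrable_iff_integrableOn_Ioo_of_le hu.1]
    exact aux_int (hanti v hv) (hb v hv) hu
  set h : ℝ → ℝ → ℝ := fun v t => volume.real ({s | t ≤ g v s} ∩ Ioo 0 1) with hh
  have fin : ∀ v t, volume ({s | t ≤ g v s} ∩ Ioo (0:ℝ) 1) ≠ ⊤ := fun v t =>
    measure_ne_top_of_subset inter_subset_right (by simp)
  have key : ∀ v ∈ Icc (0:ℝ) 1, ∀ u ∈ Icc (0:ℝ) 1,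
      D v u = ∫ t in (0:ℝ)..1, min (h v t) u := fun v hv u hu => by
    rw [← hftc v hv u hu, aux_layer (hanti v hv) (hb v hv) hu]
  have h01 : ∀ v t, h v t ∈ Icc (0:ℝ) 1 := fun v t => by
    refine ⟨measureReal_nonneg, ?_⟩
    have : volume.real (Ioo (0:ℝ) 1) = 1 := by simp [Measure.real]
    rw [← this]
    exact measureReal_mono inter_subset_right (by simp)
  have hmeas : ∀ v, Measurable (h v) := fun v => by
    have : Antitone (h v) := fun a b hab =>
      measureReal_mono (inter_subset_inter_left _ fun s hs => hab.trans hs) (fin v a)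
    exact this.measurable
  have hmono : ∀ t ∈ Icc (0:ℝ) 1, MonotoneOn (fun v => h v t) (Icc (0:ℝ) 1) := by
    intro t _ v hv w hw hvw
    refine measureReal_mono ?_ (fin w t)
    rintro s ⟨h1, h2⟩
    exact ⟨le_trans h1 (hcmp v hv w hw hvw s h2), h2⟩
  have hint : ∀ v ∈ Icc (0:ℝ) 1, (∫ t in (0:ℝ)..1, h v t) = v := by
    intro v hv
    have := key v hv 1 o
    rw [hD4 v hv] at this
    simp only [min_eq_left (h01 v _).2] at this
    exact this.symm
  exact ⟨fun v u => ∫ t in (0:ℝ)..u, h v t, h,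
    aux_copula (fun v _ => hmeas v) (fun v _ t _ => h01 v t) hmono hint,
    ⟨fun v _ => hmeas v, fun v _ t _ => h01 v t, fun _ _ _ _ => rfl, hmono, hint⟩, key⟩

lemma aux_backward (D : ℝ → ℝ → ℝ) (h : ℝ → ℝ → ℝ)
    (hm : ∀ v ∈ Icc (0:ℝ) 1, Measurable (h v))
    (hb : ∀ v ∈ Icc (0:ℝ) 1, ∀ t ∈ Icc (0:ℝ) 1, h v t ∈ Icc (0:ℝ) 1)
    (key : ∀ v ∈ Icc (0:ℝ) 1, ∀ u ∈ Icc (0:ℝ) 1, D v u = ∫ t in (0:ℝ)..1, min (h v t) u) :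
    ∀ v ∈ Icc (0:ℝ) 1, ConcaveOn ℝ (Icc (0:ℝ) 1) (fun u => D v u) := by
  intro v hv
  refine ⟨convex_Icc 0 1, ?_⟩
  intro x hx y hy a b ha hb' hab
  have hz : a • x + b • y ∈ Icc (0:ℝ) 1 := convex_Icc 0 1 hx hy ha hb' hab
  have ii : ∀ u ∈ Icc (0:ℝ) 1, IntervalIntegrable (fun t => min (h v t) u) volume 0 1 :=
    fun u hu => aux_ii ((hm v hv).min measurable_const)
      (fun t ht => ⟨le_min (hb v hv t ht).1 hu.1, (min_le_right _ _).trans hu.2⟩)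
      le_rfl zero_le_one le_rfl
  simp only
  rw [key v hv x hx, key v hv y hy, key v hv _ hz, smul_eq_mul, smul_eq_mul,
    ← intervalIntegral.integral_const_mul, ← intervalIntegral.integral_const_mul,
    ← intervalIntegral.integral_add ((ii x hx).const_mul a) ((ii y hy).const_mul b)]
  refine intervalIntegral.integral_mono_on zero_le_one
    (((ii x hx).const_mul a).add ((ii y hy).const_mul b)) (ii _ hz) fun t _ => ?_
  refine le_min ?_ ?_
  · calc a * min (h v t) x + b * min (h v t) y ≤ a * h v t + b * h v t := by
          gcongr <;> exact min_le_left _ _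
      _ = h v t := by rw [← add_mul, hab, one_mul]
  · simp only [smul_eq_mul]
    gcongr <;> exact min_le_right _ _

/-- A bivariate copula `D` is stochastically increasing
(`u ↦ D(v,u)` concave on `[0,1]` for every `v`) if and only if there are a copula
`C` and a derivative family `(h_v)` for `C` with
`D(v,u) = ∫₀¹ min(h_v(t), u) dt` on `[0,1]²`; i.e. the class of upper products
`C ∨ Π` coincides with the class of stochastically increasing copulas. -/
theorem SI_iff_upperProduct_with_Pi (D : ℝ → ℝ → ℝ) (hD : IsCopula D) :
    (∀ v ∈ Icc (0:ℝ) 1, ConcaveOn ℝ (Icc (0:ℝ) 1) (fun u => D v u))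
      ↔ ∃ C h : ℝ → ℝ → ℝ, IsCopula C ∧ IsDerivFamily C h ∧
          ∀ v ∈ Icc (0:ℝ) 1, ∀ u ∈ Icc (0:ℝ) 1,
            D v u = ∫ t in (0:ℝ)..1, min (h v t) u := by
  constructor
  · exact aux_forward D hD
  · rintro ⟨C, h, -, hh, key⟩
    exact aux_backward D h hh.1 hh.2.1 key

end
end

section
/- Let h : [0,1] → [0,1] be Lebesgue-measurable, let H(s) := λ({t ∈ [0,1] : h(t) > s}) for s ∈ [0,1], and let h* be any decreasing rearrangement of h. Then for every u ∈ [0,1], ∫₀¹ min(H(t), u) dt = ∫₀ᵘ h*(s) ds. Consequently, for any bivariate copula C with derivative family (h_v), applying the upper product transform twice yields the increasing rearranged copula: ∫₀¹ min(λ({s : h_v(s) > t}), u) dt = C↑(v,u) for all (v,u) ∈ [0,1]², i.e. T²(C) = C↑. -/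
open MeasureTheory Set

noncomputable section

/-- `hstar` is a decreasing rearrangement of `h` on `[0,1]`: it is decreasing,
maps `[0,1]` into `[0,1]`, and is equimeasurable with `h`. -/
def IsDecRearr (h hstar : ℝ → ℝ) : Prop :=
  AntitoneOn hstar (Icc (0:ℝ) 1) ∧
  (∀ t ∈ Icc (0:ℝ) 1, hstar t ∈ Icc (0:ℝ) 1) ∧
  ∀ y ∈ Icc (0:ℝ) 1,
    volume {t ∈ Icc (0:ℝ) 1 | hstar t ≤ y} = volume {t ∈ Icc (0:ℝ) 1 | h t ≤ y}

theorem rearr_aux (h hstar : ℝ → ℝ) (hmeas : Measurable h)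
    (hst : IsDecRearr h hstar) (u : ℝ) (hu : u ∈ Icc (0:ℝ) 1) :
    (∫ t in (0:ℝ)..1, min ((volume {s ∈ Icc (0:ℝ) 1 | t < h s}).toReal) u)
      = ∫ s in (0:ℝ)..u, hstar s := by
  obtain ⟨hanti, hr, heq⟩ := hst
  have hsub : Icc (0:ℝ) u ⊆ Icc 0 1 := Icc_subset_Icc le_rfl hu.2
  have hsub' : Ioc (0:ℝ) u ⊆ Icc 0 1 := Ioc_subset_Icc_self.trans hsub
  have hint : IntegrableOn hstar (Ioc 0 u) :=
    ((hanti.mono hsub).integrableOn_isCompact isCompact_Icc).mono_set Ioc_subset_Icc_self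
  have hnn : 0 ≤ᵐ[volume.restrict (Ioc (0:ℝ) u)] hstar := by
    filter_upwards [ae_restrict_mem measurableSet_Ioc] with s hs
    exact (hr s (hsub' hs)).1
  -- superlevel sets have the same measure
  have hcompl : ∀ (f : ℝ → ℝ) (t : ℝ), {s ∈ Icc (0:ℝ) 1 | t < f s}
      = Icc (0:ℝ) 1 \ {s ∈ Icc (0:ℝ) 1 | f s ≤ t} := by
    intro f t
    ext s
    simp only [mem_setOf_eq, mem_diff, not_and, not_le]
    tauto
  have hlev : ∀ t ∈ Icc (0:ℝ) 1, volume {s ∈ Icc (0:ℝ) 1 | t < h s}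
      = volume {s ∈ Icc (0:ℝ) 1 | t < hstar s} := by
    intro t ht
    have m1 : MeasurableSet {s ∈ Icc (0:ℝ) 1 | h s ≤ t} :=
      measurableSet_Icc.inter (measurableSet_le hmeas measurable_const)
    have m2 : MeasurableSet {s ∈ Icc (0:ℝ) 1 | hstar s ≤ t} := by
      apply OrdConnected.measurableSet
      refine ⟨fun x hx y hy z hz => ?_⟩
      have hzI : z ∈ Icc (0:ℝ) 1 := ⟨hx.1.1.trans hz.1, hz.2.trans hy.1.2⟩
      exact ⟨hzI, (hanti hx.1 hzI hz.1).trans hx.2⟩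
    have fin : ∀ f : ℝ → ℝ, volume {s ∈ Icc (0:ℝ) 1 | f s ≤ t} ≠ ⊤ := fun f =>
      ((measure_mono (sep_subset _ _)).trans_lt isCompact_Icc.measure_lt_top).ne
    rw [hcompl h, hcompl hstar, measure_diff (sep_subset _ _) m1.nullMeasurableSet (fin h),
      measure_diff (sep_subset _ _) m2.nullMeasurableSet (fin hstar), heq t ht]
  have hkey : ∀ t : ℝ, (volume.restrict (Ioc (0:ℝ) u)).real {s | t < hstar s}
      = min ((volume {s ∈ Icc (0:ℝ) 1 | t < hstar s}).toReal) u := by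
    intro t
    have hfin : volume {s ∈ Icc (0:ℝ) 1 | t < hstar s} ≠ ⊤ :=
      ((measure_mono (sep_subset _ _)).trans_lt isCompact_Icc.measure_lt_top).ne
    have hvu : (volume (Ioc (0:ℝ) u)).toReal = u := by simp [hu.1]
    have hvu' : (volume (Icc (0:ℝ) u)).toReal = u := by simp [hu.1]
    rw [Measure.real, Measure.restrict_apply' measurableSet_Ioc]
    by_cases hc : t < hstar u
    · have e : {s | t < hstar s} ∩ Ioc (0:ℝ) u = Ioc 0 u := by
        apply inter_eq_right.2
        intro s hs
        exact hc.trans_le (hanti (hsub' hs) hu hs.2)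
      have l : Ioc (0:ℝ) u ⊆ {s ∈ Icc (0:ℝ) 1 | t < hstar s} := fun s hs =>
        ⟨hsub' hs, hc.trans_le (hanti (hsub' hs) hu hs.2)⟩
      rw [e, hvu, min_eq_right]
      have := ENNReal.toReal_mono hfin (measure_mono l)
      rwa [hvu] at this
    · have l : {s ∈ Icc (0:ℝ) 1 | t < hstar s} ⊆ Icc 0 u := by
        intro s hs
        refine ⟨hs.1.1, ?_⟩
        by_contra hlt
        exact hc (hs.2.trans_le (hanti hu hs.1 (not_le.1 hlt).le))
      have l' := ENNReal.toReal_mono isCompact_Icc.measure_lt_top.ne (measure_mono (μ := volume) l)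
      rw [hvu'] at l'
      rw [min_eq_left l']
      congr 1
      apply le_antisymm
      · exact measure_mono fun s hs => ⟨hsub' hs.2, hs.1⟩
      · have l2 : {s ∈ Icc (0:ℝ) 1 | t < hstar s}
            ⊆ ({s | t < hstar s} ∩ Ioc (0:ℝ) u) ∪ {0} := by
          intro s hs
          rcases hs.1.1.eq_or_lt with h0 | h0
          · right; exact h0.symm
          · left; exact ⟨hs.2, h0, (l hs).2⟩
        refine (measure_mono l2).trans ((measure_union_le _ _).trans ?_)
        simp
  rw [intervalIntegral.integral_of_le hu.1, intervalIntegral.integral_of_le zero_le_one,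
    Integrable.integral_eq_integral_meas_lt hint hnn]
  rw [setIntegral_eq_of_subset_of_forall_diff_eq_zero (s := Ioc (0:ℝ) 1) measurableSet_Ioi
    Ioc_subset_Ioi_self]
  · apply setIntegral_congr_fun measurableSet_Ioc
    intro t ht
    simp only
    rw [hkey t, hlev t ⟨ht.1.le, ht.2⟩]
  · intro t ht
    have ht1 : 1 < t := by
      by_contra hle
      exact ht.2 ⟨ht.1, not_lt.1 hle⟩
    rw [hkey t]
    have : {s ∈ Icc (0:ℝ) 1 | t < hstar s} = ∅ := by
      ext s
      simp only [mem_setOf_eq, mem_empty_iff_false, iff_false, not_and, not_lt]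
      intro hs
      exact (hr s hs).2.trans ht1.le
    rw [this]
    simp [hu.1]

/-- Let `h : [0,1] → [0,1]` be measurable,
`H(s) = λ({t ∈ [0,1] : h(t) > s})`, and `h*` any decreasing rearrangement of `h`.
Then `∫₀¹ min(H(t), u) dt = ∫₀ᵘ h*(s) ds` for every `u ∈ [0,1]`.
Consequently, for any copula `C` with derivative family `(h_v)` and decreasing
rearrangements `(h_v*)`, applying the upper product transform twice yields the
increasing rearranged copula:
`∫₀¹ min(λ({s : h_v(s) > t}), u) dt = C↑(v,u) = ∫₀ᵘ h_v*(s) ds`, i.e. `T²(C) = C↑`. -/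
theorem upperProductTransform_sq_eq_rearranged (h hstar : ℝ → ℝ)
    (hmeas : Measurable h)
    (hrange : ∀ t ∈ Icc (0:ℝ) 1, h t ∈ Icc (0:ℝ) 1)
    (hst : IsDecRearr h hstar) :
    (∀ u ∈ Icc (0:ℝ) 1,
        (∫ t in (0:ℝ)..1, min ((volume {s ∈ Icc (0:ℝ) 1 | t < h s}).toReal) u)
          = ∫ s in (0:ℝ)..u, hstar s) ∧
    (∀ C hf hfstar : ℝ → ℝ → ℝ, IsCopula C → IsDerivFamily C hf →
        (∀ v ∈ Icc (0:ℝ) 1, IsDecRearr (hf v) (hfstar v)) →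
        ∀ v ∈ Icc (0:ℝ) 1, ∀ u ∈ Icc (0:ℝ) 1,
          (∫ t in (0:ℝ)..1, min ((volume {s ∈ Icc (0:ℝ) 1 | t < hf v s}).toReal) u)
            = ∫ s in (0:ℝ)..u, hfstar v s) := by
  refine ⟨fun u hu => rearr_aux h hstar hmeas hst u hu, ?_⟩
  intro C hf hfstar _ hD hs v hv u hu
  exact rearr_aux (hf v) (hfstar v) (hD.1 v hv) (hs v hv) u hu

end
end

section
/- Let h, g : [0,1] → [0,1] be Lebesgue-measurable with decreasing rearrangements h*, g*. Then ∫₀¹ |λ({t : h(t) > u}) − λ({t : g(t) > u})| du = ∫₀¹ |h*(t) − g*(t)| dt. (Applied fiberwise to derivative families of copulas D, E, this gives the isometry d₁(T(D), T(E)) = d₁(D↑, E↑) of the upper product transform in the metric d₁ induced by the L¹-norm of partial derivatives.) -/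
open MeasureTheory Set

noncomputable section

/-- Lebesgue measure on the unit interval. -/
def unitMu : Measure ℝ := volume.restrict (Icc (0:ℝ) 1)

instance unitMu_prob : IsProbabilityMeasure unitMu := by
  constructor
  simp [unitMu]

lemma level_eq (f : ℝ → ℝ) (hf : Measurable f) (u : ℝ) :
    volume {t ∈ Icc (0:ℝ) 1 | u < f t} = unitMu {t | u < f t} := by
  rw [unitMu, Measure.restrict_apply (measurableSet_lt measurable_const hf), inter_comm]
  rfl

lemma level_eq' (f : ℝ → ℝ) (hf : Measurable f) (u : ℝ) :
    volume {t ∈ Icc (0:ℝ) 1 | f t ≤ u} = unitMu {t | f t ≤ u} := by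
  rw [unitMu, Measure.restrict_apply (measurableSet_le hf measurable_const), inter_comm]
  rfl

lemma level_compl (f : ℝ → ℝ) (hf : Measurable f) (u : ℝ) :
    unitMu {t | u < f t} = 1 - unitMu {t | f t ≤ u} := by
  rw [← prob_compl_eq_one_sub (measurableSet_le hf measurable_const)]
  congr 1
  ext t
  simp

lemma exists_ext (h hstar : ℝ → ℝ) (hmeas : Measurable h) (hst : IsDecRearr h hstar) :
    ∃ H : ℝ → ℝ, Antitone H ∧ Measurable H ∧ (∀ t, H t ∈ Icc (0:ℝ) 1) ∧
      (∀ t ∈ Icc (0:ℝ) 1, H t = hstar t) ∧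
      ∀ u ∈ Icc (0:ℝ) 1, volume {t ∈ Icc (0:ℝ) 1 | u < h t} = unitMu {t | u < H t} := by
  obtain ⟨h1, h2, h3⟩ := hst
  have hanti : Antitone (fun t : ℝ => hstar (projIcc (0:ℝ) 1 zero_le_one t)) := by
    intro a b hab
    exact h1 (projIcc (0:ℝ) 1 zero_le_one a).2 (projIcc (0:ℝ) 1 zero_le_one b).2
      (monotone_projIcc zero_le_one hab)
  have heq : ∀ t ∈ Icc (0:ℝ) 1, hstar (projIcc (0:ℝ) 1 zero_le_one t) = hstar t := by
    intro t ht
    rw [projIcc_of_mem zero_le_one ht]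
  refine ⟨_, hanti, hanti.measurable, fun t => h2 _ (projIcc (0:ℝ) 1 zero_le_one t).2, heq, ?_⟩
  intro u hu
  rw [level_eq h hmeas, level_compl h hmeas, level_compl _ hanti.measurable,
    ← level_eq' h hmeas, ← level_eq' _ hanti.measurable, ← h3 u hu]
  congr 2
  ext t
  simp only [mem_setOf_eq]
  constructor
  · rintro ⟨ht, hh⟩
    exact ⟨ht, by rw [heq t ht]; exact hh⟩
  · rintro ⟨ht, hh⟩
    exact ⟨ht, by rw [heq t ht] at hh; exact hh⟩

lemma abs_level (A B : Set ℝ) (hA : MeasurableSet A) (hB : MeasurableSet B)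
    (hAB : A ⊆ B ∨ B ⊆ A) :
    |(unitMu A).toReal - (unitMu B).toReal| = (unitMu ((A \ B) ∪ (B \ A))).toReal := by
  have key : ∀ A B : Set ℝ, MeasurableSet A → A ⊆ B →
      |(unitMu A).toReal - (unitMu B).toReal| = (unitMu ((A \ B) ∪ (B \ A))).toReal := by
    intro A B hA hAB
    rw [diff_eq_empty.2 hAB, empty_union, measure_diff hAB hA.nullMeasurableSet (by finiteness),
      ENNReal.toReal_sub_of_le (measure_mono hAB) (by finiteness), abs_sub_comm, abs_of_nonneg]
    exact sub_nonneg.2 (ENNReal.toReal_mono (by finiteness) (measure_mono hAB))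
  rcases hAB with h | h
  · exact key A B hA h
  · rw [abs_sub_comm, union_comm]
    exact key B A hB h

lemma nested (H G : ℝ → ℝ) (hH : Antitone H) (hG : Antitone G) (u : ℝ) :
    {t | u < H t} ⊆ {t | u < G t} ∨ {t | u < G t} ⊆ {t | u < H t} := by
  by_contra! hcon
  obtain ⟨h1, h2⟩ := hcon
  obtain ⟨a, ha, ha'⟩ := not_subset.1 h1
  obtain ⟨b, hb, hb'⟩ := not_subset.1 h2
  simp only [mem_setOf_eq, not_lt] at ha ha' hb hb'
  rcases le_total a b with hab | hab
  · linarith [hG hab]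
  · linarith [hH hab]

lemma fiber (x y : ℝ) (hx : x ∈ Icc (0:ℝ) 1) (hy : y ∈ Icc (0:ℝ) 1) :
    (unitMu {u | (u < x ∧ ¬ u < y) ∨ (u < y ∧ ¬ u < x)}).toReal = |x - y| := by
  have key : {u | (u < x ∧ ¬ u < y) ∨ (u < y ∧ ¬ u < x)} = Ico (min x y) (max x y) := by
    ext u
    simp only [mem_setOf_eq, mem_Ico, min_le_iff, lt_max_iff, not_lt]
    grind
  have hsub : Ico (min x y) (max x y) ⊆ Icc (0:ℝ) 1 := by
    intro u hu
    exact ⟨(le_min hx.1 hy.1).trans hu.1, hu.2.le.trans (max_le hx.2 hy.2)⟩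
  rw [key, unitMu, Measure.restrict_apply measurableSet_Ico, inter_eq_left.2 hsub,
    Real.volume_Ico, max_sub_min_eq_abs, ENNReal.toReal_ofReal (abs_nonneg _), abs_sub_comm]

lemma main_aux (H G : ℝ → ℝ) (hH : Antitone H) (hG : Antitone G)
    (hHr : ∀ t, H t ∈ Icc (0:ℝ) 1) (hGr : ∀ t, G t ∈ Icc (0:ℝ) 1) :
    ∫ u, |(unitMu {t | u < H t}).toReal - (unitMu {t | u < G t}).toReal| ∂unitMu
      = ∫ t, |H t - G t| ∂unitMu := by
  have mH := hH.measurable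
  have mG := hG.measurable
  let P : Set (ℝ × ℝ) :=
    {p | (p.1 < H p.2 ∧ ¬ p.1 < G p.2) ∨ (p.1 < G p.2 ∧ ¬ p.1 < H p.2)}
  have m1 : MeasurableSet {p : ℝ × ℝ | p.1 < H p.2} :=
    measurableSet_lt measurable_fst (mH.comp measurable_snd)
  have m2 : MeasurableSet {p : ℝ × ℝ | p.1 < G p.2} :=
    measurableSet_lt measurable_fst (mG.comp measurable_snd)
  have mP : MeasurableSet P := (m1.diff m2).union (m2.diff m1)
  have e1 : ∀ u, |(unitMu {t | u < H t}).toReal - (unitMu {t | u < G t}).toReal|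
      = (unitMu (Prod.mk u ⁻¹' P)).toReal := fun u =>
    abs_level _ _ (measurableSet_lt measurable_const mH) (measurableSet_lt measurable_const mG)
      (nested H G hH hG u)
  have e2 : ∀ t, |H t - G t| = (unitMu ((fun u => (u, t)) ⁻¹' P)).toReal := fun t =>
    (fiber _ _ (hHr t) (hGr t)).symm
  simp_rw [e1, e2]
  rw [integral_toReal (measurable_measure_prodMk_left mP).aemeasurable
      (Filter.Eventually.of_forall fun _ => measure_lt_top _ _),
    integral_toReal (measurable_measure_prodMk_right mP).aemeasurable
      (Filter.Eventually.of_forall fun _ => measure_lt_top _ _),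
    ← Measure.prod_apply mP, ← Measure.prod_apply_symm mP]

/-- For measurable `h, g : [0,1] → [0,1]` with decreasing
rearrangements `h*, g*`:
`∫₀¹ |λ({t : h(t) > u}) − λ({t : g(t) > u})| du = ∫₀¹ |h*(t) − g*(t)| dt`
(the isometry `d₁(T(D), T(E)) = d₁(D↑, E↑)`, fiberwise). -/
theorem upperLevel_L1_isometry (h g hstar gstar : ℝ → ℝ)
    (hmeas : Measurable h) (gmeas : Measurable g)
    (hrange : ∀ t ∈ Icc (0:ℝ) 1, h t ∈ Icc (0:ℝ) 1)
    (grange : ∀ t ∈ Icc (0:ℝ) 1, g t ∈ Icc (0:ℝ) 1)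
    (hst : IsDecRearr h hstar) (gst : IsDecRearr g gstar) :
    (∫ u in (0:ℝ)..1,
        |(volume {t ∈ Icc (0:ℝ) 1 | u < h t}).toReal
          - (volume {t ∈ Icc (0:ℝ) 1 | u < g t}).toReal|)
      = ∫ t in (0:ℝ)..1, |hstar t - gstar t| := by
  obtain ⟨H, H1, H2, H3, H4, H5⟩ := exists_ext h hstar hmeas hst
  obtain ⟨G, G1, G2, G3, G4, G5⟩ := exists_ext g gstar gmeas gst
  rw [intervalIntegral.integral_of_le zero_le_one, intervalIntegral.integral_of_le zero_le_one,
    ← integral_Icc_eq_integral_Ioc, ← integral_Icc_eq_integral_Ioc]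
  refine Eq.trans (setIntegral_congr_fun measurableSet_Icc ?_)
    ((main_aux H G H1 G1 H3 G3).trans (setIntegral_congr_fun measurableSet_Icc ?_))
  · intro u hu
    simp only [H5 u hu, G5 u hu]
  · intro t ht
    simp only [H4 t ht, G4 t ht]

end
end

section
/- Let C be a stochastically increasing bivariate copula admitting a derivative family (f_v)_{v∈[0,1]} in which every f_v : [0,1] → [0,1] is decreasing and right-continuous. Then C is a fixed point of the upper product transform, i.e. ∫₀¹ min(f_v(t), u) dt = C(v,u) for all (v,u) ∈ [0,1]², if and only if for every v ∈ [0,1] one has f_v⁻¹(t) = f_v(t) for λ-almost every t ∈ [0,1], where f_v⁻¹(w) := inf{t ∈ [0,1] : f_v(t) ≤ w} (inf ∅ = 1). -/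
open MeasureTheory Set

noncomputable section

theorem aux_step (φ : ℝ → ℝ) (a b : ℝ) (ha : 0 ≤ a) (hb : 0 ≤ b)
    (h1 : ∀ t ∈ Ioc 0 b, t < a → φ t = 1) (h0 : ∀ t ∈ Ioc 0 b, a < t → φ t = 0) :
    ∫ t in (0:ℝ)..b, φ t = min a b := by
  rw [intervalIntegral.integral_of_le hb]
  have hne : ∀ᵐ t : ℝ, t ≠ a := by simp [ae_iff, measure_singleton]
  have : ∫ t in Ioc 0 b, φ t = ∫ t in Ioc 0 b, (Iic a).indicator (fun _ => (1:ℝ)) t := by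
    apply setIntegral_congr_ae measurableSet_Ioc
    filter_upwards [hne] with t ht htb
    rcases lt_or_gt_of_ne ht with h | h
    · rw [h1 t htb h, indicator_of_mem (show t ∈ Iic a from h.le)]
    · rw [h0 t htb h, indicator_of_notMem (by simpa using h)]
  rw [this, setIntegral_indicator measurableSet_Iic, Ioc_inter_Iic]
  simp [hb, ha, min_comm, le_min]

theorem aux_bdd (g : ℝ → ℝ) (w : ℝ) :
    0 ∈ lowerBounds (insert (1:ℝ) {t ∈ Icc (0:ℝ) 1 | g t ≤ w}) := by
  rintro x (rfl | hx)
  · exact zero_le_one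
  · exact hx.1.1

theorem aux_nonneg (g : ℝ → ℝ) (w : ℝ) : 0 ≤ geninv g w :=
  le_csInf (insert_nonempty _ _) (aux_bdd g w)

theorem aux_le_one (g : ℝ → ℝ) (w : ℝ) : geninv g w ≤ 1 :=
  csInf_le ⟨0, aux_bdd g w⟩ (mem_insert _ _)

theorem aux_anti (g : ℝ → ℝ) : Antitone (geninv g) := by
  intro w w' h
  apply csInf_le_csInf ⟨0, aux_bdd g w'⟩ (insert_nonempty _ _)
  apply insert_subset_insert
  intro t ht
  exact ⟨ht.1, ht.2.trans h⟩

theorem aux_swap (g : ℝ → ℝ) (hm : Measurable g) (hg : ∀ t ∈ Icc (0:ℝ) 1, g t ∈ Icc (0:ℝ) 1)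
    (hd : AntitoneOn g (Icc (0:ℝ) 1)) (u : ℝ) (hu : u ∈ Icc (0:ℝ) 1) :
    ∫ t in (0:ℝ)..1, min (g t) u = ∫ w in (0:ℝ)..u, geninv g w := by
  classical
  let F : ℝ → ℝ → ℝ := fun t w => if w < g t then 1 else 0
  have e1 : ∫ t in (0:ℝ)..1, min (g t) u = ∫ t in (0:ℝ)..1, ∫ w in (0:ℝ)..u, F t w := by
    apply intervalIntegral.integral_congr
    intro t ht
    rw [uIcc_of_le zero_le_one] at ht
    refine (aux_step (F t) (g t) u (hg t ht).1 hu.1 ?_ ?_).symm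
    · intro w _ h
      simp [F, h]
    · intro w _ h
      simp [F, h.le]
  have e2 : ∫ w in (0:ℝ)..u, geninv g w = ∫ w in (0:ℝ)..u, ∫ t in (0:ℝ)..1, F t w := by
    apply intervalIntegral.integral_congr
    intro w _
    have := aux_step (fun t => F t w) (geninv g w) 1 (aux_nonneg g w) zero_le_one ?_ ?_
    · rw [min_eq_left (aux_le_one g w)] at this
      exact this.symm
    · intro t ht h
      have h' : w < g t := by
        by_contra hc
        exact notMem_of_lt_csInf h ⟨0, aux_bdd g w⟩
          (mem_insert_of_mem _ ⟨⟨ht.1.le, ht.2⟩, not_lt.1 hc⟩)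
      simp [F, h']
    · intro t ht h
      obtain ⟨s, hs, hst⟩ := exists_lt_of_csInf_lt (insert_nonempty _ _) h
      rcases hs with rfl | hs
      · exact absurd ht.2 (not_le.2 hst)
      · have h' : g t ≤ w := (hd hs.1 ⟨ht.1.le, ht.2⟩ hst.le).trans hs.2
        simp [F, h']
  rw [e1, e2]
  apply intervalIntegral_intervalIntegral_swap
  have hmF : Measurable F.uncurry :=
    Measurable.ite (measurableSet_lt measurable_snd (hm.comp measurable_fst))
      measurable_const measurable_const
  refine Measure.integrableOn_of_bounded (M := 1) ?_ hmF.aestronglyMeasurable ?_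
  · rw [Measure.volume_eq_prod, Measure.prod_prod]
    simp [uIoc, ENNReal.mul_eq_top]
  · refine Filter.Eventually.of_forall ?_
    rintro ⟨t, w⟩
    simp only [Function.uncurry, F]
    split_ifs <;> simp

/-- Let `C` be a stochastically increasing copula with a
derivative family `(f_v)` of decreasing, right-continuous functions. Then `C` is
a fixed point of the upper product transform, `∫₀¹ min(f_v(t), u) dt = C(v,u)`
for all `(v,u) ∈ [0,1]²`, if and only if for every `v ∈ [0,1]` one has
`f_v⁻¹ = f_v` λ-a.e. on `[0,1]`. -/
theorem fixedPoint_iff_involution (C f : ℝ → ℝ → ℝ)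
    (hC : IsCopula C)
    (hSI : ∀ v ∈ Icc (0:ℝ) 1, ConcaveOn ℝ (Icc (0:ℝ) 1) (fun u => C v u))
    (hf : IsDerivFamily C f)
    (fdec : ∀ v ∈ Icc (0:ℝ) 1, AntitoneOn (f v) (Icc (0:ℝ) 1))
    (frc : ∀ v ∈ Icc (0:ℝ) 1, ∀ t ∈ Ico (0:ℝ) 1, ContinuousWithinAt (f v) (Icc t 1) t) :
    (∀ v ∈ Icc (0:ℝ) 1, ∀ u ∈ Icc (0:ℝ) 1,
        (∫ t in (0:ℝ)..1, min (f v t) u) = C v u)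
      ↔ (∀ v ∈ Icc (0:ℝ) 1,
          ∀ᵐ t ∂(volume.restrict (Icc (0:ℝ) 1)), geninv (f v) t = f v t) := by
  obtain ⟨hm, hr, hCi, -, -⟩ := hf
  have key : ∀ v ∈ Icc (0:ℝ) 1, ∀ u ∈ Icc (0:ℝ) 1,
      ((∫ t in (0:ℝ)..1, min (f v t) u) = C v u ↔
        ∫ w in (0:ℝ)..u, geninv (f v) w = ∫ t in (0:ℝ)..u, f v t) := by
    intro v hv u hu
    rw [aux_swap (f v) (hm v hv) (hr v hv) (fdec v hv) u hu, hCi v hv u hu]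
  constructor
  · intro H v hv
    have H' := fun u hu => (key v hv u hu).1 (H v hv u hu)
    have i1 : IntervalIntegrable (geninv (f v)) volume 0 1 :=
      (aux_anti (f v)).intervalIntegrable
    have i2 : IntervalIntegrable (f v) volume 0 1 := by
      apply AntitoneOn.intervalIntegrable
      rw [uIcc_of_le zero_le_one]
      exact fdec v hv
    have n0 : ∀ᵐ t : ℝ, t ≠ 0 := by simp [ae_iff, measure_singleton]
    have n1 : ∀ᵐ t : ℝ, t ≠ 1 := by simp [ae_iff, measure_singleton]
    rw [ae_restrict_iff' measurableSet_Icc]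
    filter_upwards [i1.ae_hasDerivAt_integral, i2.ae_hasDerivAt_integral, n0, n1]
      with t d1 d2 t0 t1 ht
    rw [uIcc_of_le zero_le_one] at d1 d2
    have d1 := d1 ht 0 ⟨le_rfl, zero_le_one⟩
    have d2 := d2 ht 0 ⟨le_rfl, zero_le_one⟩
    refine d1.unique (d2.congr_of_eventuallyEq ?_)
    filter_upwards [Icc_mem_nhds (lt_of_le_of_ne ht.1 t0.symm) (lt_of_le_of_ne ht.2 t1)]
      with u hu
    exact H' u hu
  · intro H v hv u hu
    rw [key v hv u hu]
    have := (ae_restrict_iff' measurableSet_Icc).1 (H v hv)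
    apply intervalIntegral.integral_congr_ae
    filter_upwards [this] with t h ht
    rw [uIoc_of_le hu.1] at ht
    exact h ⟨ht.1.le, ht.2.trans hu.2⟩

end
end

section
/- Let μ be a probability measure on ℝ whose cumulative distribution function F(x) = μ((−∞, x]) is continuous, and let G be the cumulative distribution function of the convolution μ ∗ μ (the law of the sum of two independent random variables each distributed according to μ). Define the quantile functions F⁻¹(t) := inf{x ∈ ℝ : F(x) ≥ t} and G⁻¹(v) := inf{x ∈ ℝ : G(x) ≥ v}. Then for every v ∈ (0,1): ∫₀¹ F(G⁻¹(v) − F⁻¹(t)) dt = v. -/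
open MeasureTheory Set

noncomputable section

/-- The cumulative distribution function of a measure on `ℝ`. -/
def cdfOf (μ : Measure ℝ) (x : ℝ) : ℝ := (μ (Iic x)).toReal

/-- The convolution `μ ∗ μ`: the law of the sum of two independent random
variables each distributed according to `μ`. -/
def convSelf (μ : Measure ℝ) : Measure ℝ :=
  Measure.map (fun p : ℝ × ℝ => p.1 + p.2) (μ.prod μ)

/-- The quantile function `F⁻¹(t) = inf {x : F x ≥ t}` of a distribution
function `F`. -/
def quantile (F : ℝ → ℝ) (t : ℝ) : ℝ := sInf {x : ℝ | t ≤ F x}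

theorem cdfOf_eq_cdf (μ : Measure ℝ) [IsProbabilityMeasure μ] :
    cdfOf μ = ProbabilityTheory.cdf μ := by
  funext x
  rw [ProbabilityTheory.cdf_eq_real]
  rfl

theorem cdfOf_mono (μ : Measure ℝ) [IsProbabilityMeasure μ] : Monotone (cdfOf μ) := by
  rw [cdfOf_eq_cdf]
  exact ProbabilityTheory.monotone_cdf μ

theorem cdfOf_nonneg (μ : Measure ℝ) (x : ℝ) : 0 ≤ cdfOf μ x := ENNReal.toReal_nonneg

theorem cdfOf_le_one (μ : Measure ℝ) [IsProbabilityMeasure μ] (x : ℝ) : cdfOf μ x ≤ 1 := by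
  rw [cdfOf_eq_cdf]
  exact ProbabilityTheory.cdf_le_one μ x

theorem exists_cdfOf_lt (μ : Measure ℝ) [IsProbabilityMeasure μ] {t : ℝ} (ht : 0 < t) :
    ∃ x, cdfOf μ x < t := by
  rw [cdfOf_eq_cdf]
  exact ((ProbabilityTheory.tendsto_cdf_atBot μ).eventually_lt_const ht).exists

theorem exists_lt_cdfOf (μ : Measure ℝ) [IsProbabilityMeasure μ] {t : ℝ} (ht : t < 1) :
    ∃ x, t < cdfOf μ x := by
  rw [cdfOf_eq_cdf]
  exact ((ProbabilityTheory.tendsto_cdf_atTop μ).eventually_const_lt ht).exists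

theorem quantile_le_iff (μ : Measure ℝ) [IsProbabilityMeasure μ] (hF : Continuous (cdfOf μ))
    {t : ℝ} (ht : t ∈ Ioo (0:ℝ) 1) (x : ℝ) :
    quantile (cdfOf μ) t ≤ x ↔ t ≤ cdfOf μ x := by
  have hb : BddBelow {x : ℝ | t ≤ cdfOf μ x} := by
    obtain ⟨a, ha⟩ := exists_cdfOf_lt μ ht.1
    refine ⟨a, fun y hy => ?_⟩
    by_contra! h
    have h1 := cdfOf_mono μ h.le
    have h2 : t ≤ cdfOf μ y := hy
    linarith
  have hn : {x : ℝ | t ≤ cdfOf μ x}.Nonempty := by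
    obtain ⟨a, ha⟩ := exists_lt_cdfOf μ ht.2
    exact ⟨a, ha.le⟩
  have hc : IsClosed {x : ℝ | t ≤ cdfOf μ x} := isClosed_le continuous_const hF
  have hm : t ≤ cdfOf μ (quantile (cdfOf μ) t) := hc.csInf_mem hn hb
  exact ⟨fun h => hm.trans (cdfOf_mono μ h), fun h => csInf_le hb h⟩

theorem cdfOf_quantile (μ : Measure ℝ) [IsProbabilityMeasure μ] (hF : Continuous (cdfOf μ))
    {t : ℝ} (ht : t ∈ Ioo (0:ℝ) 1) : cdfOf μ (quantile (cdfOf μ) t) = t := by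
  apply le_antisymm
  · obtain ⟨a, ha⟩ := exists_cdfOf_lt μ ht.1
    obtain ⟨b, hb⟩ := exists_lt_cdfOf μ ht.2
    obtain ⟨y, hy⟩ := mem_range_of_exists_le_of_exists_ge hF ⟨a, ha.le⟩ ⟨b, hb.le⟩
    have := (quantile_le_iff μ hF ht y).2 hy.ge
    exact (cdfOf_mono μ this).trans hy.le
  · exact (quantile_le_iff μ hF ht _).1 le_rfl

theorem aemeasurable_quantile (μ : Measure ℝ) [IsProbabilityMeasure μ]
    (hF : Continuous (cdfOf μ)) :
    AEMeasurable (quantile (cdfOf μ)) (volume.restrict (Ioo (0:ℝ) 1)) := by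
  apply aemeasurable_restrict_of_monotoneOn measurableSet_Ioo
  intro s hs t ht hst
  rw [quantile_le_iff μ hF hs, cdfOf_quantile μ hF ht]
  exact hst

theorem map_quantile (μ : Measure ℝ) [IsProbabilityMeasure μ] (hF : Continuous (cdfOf μ)) :
    Measure.map (quantile (cdfOf μ)) (volume.restrict (Ioo (0:ℝ) 1)) = μ := by
  have hq := aemeasurable_quantile μ hF
  haveI : IsFiniteMeasure (volume.restrict (Ioo (0:ℝ) 1)) := ⟨by simp⟩
  refine Measure.ext_of_Iic _ _ fun x => ?_
  rw [Measure.map_apply_of_aemeasurable hq measurableSet_Iic,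
    Measure.restrict_apply' measurableSet_Ioo]
  have h1 : quantile (cdfOf μ) ⁻¹' Iic x ∩ Ioo 0 1 = Iic (cdfOf μ x) ∩ Ioo 0 1 := by
    ext t
    constructor
    · rintro ⟨h, ht⟩
      exact ⟨(quantile_le_iff μ hF ht x).1 h, ht⟩
    · rintro ⟨h, ht⟩
      exact ⟨(quantile_le_iff μ hF ht x).2 h, ht⟩
  rw [h1, ← Measure.restrict_apply' measurableSet_Ioo, restrict_Ioo_eq_restrict_Ioc,
    Measure.restrict_apply' measurableSet_Ioc, inter_comm, Ioc_inter_Iic,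
    inf_eq_right.2 (cdfOf_le_one μ x), Real.volume_Ioc, sub_zero, cdfOf,
    ENNReal.ofReal_toReal (measure_ne_top _ _)]

theorem cdfOf_convSelf (μ : Measure ℝ) [IsProbabilityMeasure μ] (hF : Continuous (cdfOf μ))
    (x : ℝ) : cdfOf (convSelf μ) x = ∫ s, cdfOf μ (x - s) ∂μ := by
  have hm : Measurable (fun p : ℝ × ℝ => p.1 + p.2) := by fun_prop
  rw [cdfOf, convSelf, Measure.map_apply hm measurableSet_Iic,
    Measure.prod_apply (hm measurableSet_Iic)]
  rw [integral_eq_lintegral_of_nonneg_ae (Filter.Eventually.of_forall fun s => cdfOf_nonneg _ _)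
    (by fun_prop)]
  congr 1
  refine lintegral_congr fun s => ?_
  rw [cdfOf, ENNReal.ofReal_toReal (measure_ne_top _ _)]
  congr 1
  ext y
  simp [le_sub_iff_add_le, add_comm]

theorem continuous_cdfOf_convSelf (μ : Measure ℝ) [IsProbabilityMeasure μ]
    (hF : Continuous (cdfOf μ)) : Continuous (cdfOf (convSelf μ)) := by
  rw [funext (cdfOf_convSelf μ hF)]
  refine continuous_of_dominated (bound := fun _ => 1) (fun x => by fun_prop)
    (fun x => Filter.Eventually.of_forall fun s => ?_) (integrable_const _)
    (Filter.Eventually.of_forall fun s => by fun_prop)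
  rw [Real.norm_of_nonneg (cdfOf_nonneg _ _)]
  exact cdfOf_le_one _ _

/-- Let `μ` be a probability measure on `ℝ` with continuous
cdf `F`, and let `G` be the cdf of `μ ∗ μ`. Then for every `v ∈ (0,1)`:
`∫₀¹ F(G⁻¹(v) − F⁻¹(t)) dt = v`. -/
theorem integral_cdf_convolution_quantile (μ : Measure ℝ) [IsProbabilityMeasure μ]
    (hF : Continuous (cdfOf μ)) :
    ∀ v ∈ Ioo (0:ℝ) 1,
      (∫ t in (0:ℝ)..1,
        cdfOf μ (quantile (cdfOf (convSelf μ)) v - quantile (cdfOf μ) t)) = v := by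
  intro v hv
  haveI : IsProbabilityMeasure (convSelf μ) :=
    Measure.isProbabilityMeasure_map (by fun_prop)
  have hv' := cdfOf_quantile (convSelf μ) (continuous_cdfOf_convSelf μ hF) hv
  rw [cdfOf_convSelf μ hF] at hv'
  generalize quantile (cdfOf (convSelf μ)) v = c at hv' ⊢
  rw [intervalIntegral.integral_of_le zero_le_one, ← restrict_Ioo_eq_restrict_Ioc]
  refine Eq.trans ?_ hv'
  have h := integral_map (aemeasurable_quantile μ hF)
    (f := fun s => cdfOf μ (c - s)) (by fun_prop)
  rw [map_quantile μ hF] at h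
  exact h.symm

end
end

section
/- Let h, g : [0,1] → [0,1] be Lebesgue-measurable with ∫₀¹ h(t) dt = ∫₀¹ g(t) dt, and let h*, g* be decreasing rearrangements of h and g. Then the following are equivalent: (1) ∫₀ᵛ h*(t) dt ≤ ∫₀ᵛ g*(t) dt for every v ∈ [0,1] (the Schur order h ≺_S g); (2) ∫₀¹ min(h(t), u) dt ≥ ∫₀¹ min(g(t), u) dt for every u ∈ [0,1]. (Applied fiberwise to derivative families of copulas D, E, this shows that D ≤_{∂₂S} E, the pointwise reversed order T(D) ≥_lo T(E) of upper products with Π, and the pointwise order T²(D) ≤_lo T²(E) of increasing rearranged copulas are all equivalent.) -/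
open MeasureTheory Set

noncomputable section

lemma aux_min_rearr (h hstar : ℝ → ℝ) (hmeas : Measurable h)
    (hrange : ∀ t ∈ Icc (0:ℝ) 1, h t ∈ Icc (0:ℝ) 1)
    (hst : IsDecRearr h hstar) (u : ℝ) :
    (∫ t in (0:ℝ)..1, min (h t) u) = ∫ t in (0:ℝ)..1, min (hstar t) u := by
  obtain ⟨ha, hr, hv⟩ := hst
  have hsm : AEMeasurable hstar (volume.restrict (Icc (0:ℝ) 1)) :=
    aemeasurable_restrict_of_antitoneOn measurableSet_Icc ha
  have hmap : Measure.map h (volume.restrict (Icc (0:ℝ) 1))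
      = Measure.map hstar (volume.restrict (Icc (0:ℝ) 1)) := by
    haveI : IsFiniteMeasure (Measure.map h (volume.restrict (Icc (0:ℝ) 1))) :=
      Measure.isFiniteMeasure_map _ _
    apply Measure.ext_of_Iic
    intro y
    rw [Measure.map_apply_of_aemeasurable hmeas.aemeasurable measurableSet_Iic,
      Measure.map_apply_of_aemeasurable hsm measurableSet_Iic,
      Measure.restrict_apply' measurableSet_Icc, Measure.restrict_apply' measurableSet_Icc]
    have e : ∀ f : ℝ → ℝ, f ⁻¹' Iic y ∩ Icc (0:ℝ) 1 = {t ∈ Icc (0:ℝ) 1 | f t ≤ y} := by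
      intro f; ext t; simp [and_comm]
    rw [e, e]
    by_cases hy : y ∈ Icc (0:ℝ) 1
    · exact (hv y hy).symm
    · congr 1
      ext t
      simp only [mem_setOf_eq]
      refine and_congr_right fun ht => ?_
      have h1 := hrange t ht
      have h2 := hr t ht
      simp only [mem_Icc, not_and_or, not_le] at h1 h2 hy
      constructor <;> intro _ <;> rcases hy with hy | hy <;> linarith
  rw [intervalIntegral.integral_of_le zero_le_one, intervalIntegral.integral_of_le zero_le_one,
    ← integral_Icc_eq_integral_Ioc, ← integral_Icc_eq_integral_Ioc]
  have hc : Continuous (fun x : ℝ => min x u) := by fun_prop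
  rw [← integral_map (f := fun x : ℝ => min x u) hmeas.aemeasurable hc.aestronglyMeasurable,
    ← integral_map (f := fun x : ℝ => min x u) hsm hc.aestronglyMeasurable, hmap]

lemma aux_int_s17 (f : ℝ → ℝ) (hf : AntitoneOn f (Icc (0:ℝ) 1)) (a b : ℝ)
    (ha : a ∈ Icc (0:ℝ) 1) (hb : b ∈ Icc (0:ℝ) 1) :
    IntervalIntegrable f volume a b :=
  AntitoneOn.intervalIntegrable (hf.mono (uIcc_subset_Icc ha hb))

lemma aux_anti_s17 (f : ℝ → ℝ) (hf : AntitoneOn f (Icc (0:ℝ) 1)) (u : ℝ) :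
    AntitoneOn (fun t => min (f t) u) (Icc (0:ℝ) 1) :=
  fun _ hx _ hy hxy => min_le_min_right _ (hf hx hy hxy)

lemma aux_le (f : ℝ → ℝ) (hf : AntitoneOn f (Icc (0:ℝ) 1)) (u v : ℝ)
    (hv : v ∈ Icc (0:ℝ) 1) :
    (∫ t in (0:ℝ)..1, min (f t) u) + (∫ t in (0:ℝ)..v, f t) ≤
      (∫ t in (0:ℝ)..1, f t) + u * v := by
  have z0 : (0:ℝ) ∈ Icc (0:ℝ) 1 := by simp
  have z1 : (1:ℝ) ∈ Icc (0:ℝ) 1 := by simp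
  have hm := aux_anti_s17 f hf u
  rw [← intervalIntegral.integral_add_adjacent_intervals (aux_int_s17 _ hm 0 v z0 hv)
      (aux_int_s17 _ hm v 1 hv z1),
    ← intervalIntegral.integral_add_adjacent_intervals (aux_int_s17 _ hf 0 v z0 hv)
      (aux_int_s17 _ hf v 1 hv z1)]
  have A : (∫ t in (0:ℝ)..v, min (f t) u) ≤ ∫ t in (0:ℝ)..v, u :=
    intervalIntegral.integral_mono_on hv.1 (aux_int_s17 _ hm 0 v z0 hv) (by simp)
      fun t _ => min_le_right _ _
  have B : (∫ t in v..1, min (f t) u) ≤ ∫ t in v..1, f t :=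
    intervalIntegral.integral_mono_on hv.2 (aux_int_s17 _ hm v 1 hv z1) (aux_int_s17 _ hf v 1 hv z1)
      fun t _ => min_le_left _ _
  simp at A
  linarith

lemma aux_ge (f : ℝ → ℝ) (hf : AntitoneOn f (Icc (0:ℝ) 1)) (u v : ℝ)
    (hv : v ∈ Icc (0:ℝ) 1) (h1 : ∀ t ∈ Ioo 0 v, u ≤ f t) (h2 : ∀ t ∈ Ioo v 1, f t ≤ u) :
    (∫ t in (0:ℝ)..1, f t) + u * v ≤
    (∫ t in (0:ℝ)..1, min (f t) u) + (∫ t in (0:ℝ)..v, f t) := by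
  have z0 : (0:ℝ) ∈ Icc (0:ℝ) 1 := by simp
  have z1 : (1:ℝ) ∈ Icc (0:ℝ) 1 := by simp
  have hm := aux_anti_s17 f hf u
  rw [← intervalIntegral.integral_add_adjacent_intervals (aux_int_s17 _ hm 0 v z0 hv)
      (aux_int_s17 _ hm v 1 hv z1),
    ← intervalIntegral.integral_add_adjacent_intervals (aux_int_s17 _ hf 0 v z0 hv)
      (aux_int_s17 _ hf v 1 hv z1)]
  have A : (∫ t in (0:ℝ)..v, u) ≤ ∫ t in (0:ℝ)..v, min (f t) u :=
    intervalIntegral.integral_mono_on_of_le_Ioo hv.1 (by simp) (aux_int_s17 _ hm 0 v z0 hv)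
      fun t ht => le_min (h1 t ht) le_rfl
  have B : (∫ t in v..1, f t) ≤ ∫ t in v..1, min (f t) u :=
    intervalIntegral.integral_mono_on_of_le_Ioo hv.2 (aux_int_s17 _ hf v 1 hv z1)
      (aux_int_s17 _ hm v 1 hv z1) fun t ht => le_min le_rfl (h2 t ht)
  simp at A
  linarith

lemma aux_cross (f : ℝ → ℝ) (hf : AntitoneOn f (Icc (0:ℝ) 1)) (u : ℝ) :
    ∃ v ∈ Icc (0:ℝ) 1, (∀ t ∈ Ioo 0 v, u ≤ f t) ∧ (∀ t ∈ Ioo v 1, f t ≤ u) := by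
  by_cases hne : ({t ∈ Icc (0:ℝ) 1 | u < f t}).Nonempty
  · have hbd : BddAbove {t ∈ Icc (0:ℝ) 1 | u < f t} := ⟨1, fun t ht => ht.1.2⟩
    obtain ⟨w, hw⟩ := hne
    have hv1 : sSup {t ∈ Icc (0:ℝ) 1 | u < f t} ≤ 1 := csSup_le ⟨w, hw⟩ fun t ht => ht.1.2
    have hv0 : 0 ≤ sSup {t ∈ Icc (0:ℝ) 1 | u < f t} := hw.1.1.trans (le_csSup hbd hw)
    refine ⟨_, ⟨hv0, hv1⟩, fun t ht => ?_, fun t ht => ?_⟩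
    · obtain ⟨s, hs, hts⟩ := exists_lt_of_lt_csSup ⟨w, hw⟩ ht.2
      exact hs.2.le.trans (hf ⟨ht.1.le, ht.2.le.trans hv1⟩ hs.1 hts.le)
    · by_contra hc
      have := le_csSup hbd (show t ∈ {t ∈ Icc (0:ℝ) 1 | u < f t} from
        ⟨⟨hv0.trans ht.1.le, ht.2.le⟩, not_le.1 hc⟩)
      exact absurd ht.1 (not_lt.2 this)
  · refine ⟨0, by simp, by simp, fun t ht => ?_⟩
    by_contra hc
    exact hne ⟨t, ⟨ht.1.le, ht.2.le⟩, not_le.1 hc⟩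

/-- Let `h, g : [0,1] → [0,1]` be measurable with
`∫₀¹ h = ∫₀¹ g` and decreasing rearrangements `h*, g*`. Then the Schur order
`h ≺_S g` (i.e. `∫₀ᵛ h* ≤ ∫₀ᵛ g*` for all `v ∈ [0,1]`) holds if and only if
`∫₀¹ min(h(t), u) dt ≥ ∫₀¹ min(g(t), u) dt` for every `u ∈ [0,1]`
(fiberwise: `D ≤_{∂₂S} E` ⟺ `T(D) ≥_lo T(E)` ⟺ `T²(D) ≤_lo T²(E)`). -/
theorem schur_order_iff_upperProductTransform_ge (h g hstar gstar : ℝ → ℝ)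
    (hmeas : Measurable h) (gmeas : Measurable g)
    (hrange : ∀ t ∈ Icc (0:ℝ) 1, h t ∈ Icc (0:ℝ) 1)
    (grange : ∀ t ∈ Icc (0:ℝ) 1, g t ∈ Icc (0:ℝ) 1)
    (hmean : (∫ t in (0:ℝ)..1, h t) = ∫ t in (0:ℝ)..1, g t)
    (hst : IsDecRearr h hstar) (gst : IsDecRearr g gstar) :
    (∀ v ∈ Icc (0:ℝ) 1, (∫ t in (0:ℝ)..v, hstar t) ≤ ∫ t in (0:ℝ)..v, gstar t)
      ↔ (∀ u ∈ Icc (0:ℝ) 1,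
          (∫ t in (0:ℝ)..1, min (g t) u) ≤ ∫ t in (0:ℝ)..1, min (h t) u) := by
  have one : ∀ f : ℝ → ℝ, (∀ t ∈ Icc (0:ℝ) 1, f t ∈ Icc (0:ℝ) 1) →
      (∫ t in (0:ℝ)..1, min (f t) 1) = ∫ t in (0:ℝ)..1, f t := by
    intro f hf
    apply intervalIntegral.integral_congr
    intro t ht
    rw [uIcc_of_le zero_le_one] at ht
    exact min_eq_left (hf t ht).2
  have hh := aux_min_rearr h hstar hmeas hrange hst
  have hg := aux_min_rearr g gstar gmeas grange gst
  have hm : (∫ t in (0:ℝ)..1, hstar t) = ∫ t in (0:ℝ)..1, gstar t := by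
    rw [← one hstar hst.2.1, ← one gstar gst.2.1, ← hh, ← hg, one h hrange, one g grange, hmean]
  simp only [hh, hg]
  constructor
  · intro H u hu
    obtain ⟨v, hv, h1, h2⟩ := aux_cross hstar hst.1 u
    have A := aux_ge hstar hst.1 u v hv h1 h2
    have B := aux_le gstar gst.1 u v hv
    have C := H v hv
    linarith
  · intro H v hv
    have A := aux_ge gstar gst.1 (gstar v) v hv
      (fun t ht => gst.1 ⟨ht.1.le, ht.2.le.trans hv.2⟩ hv ht.2.le)
      (fun t ht => gst.1 hv ⟨hv.1.trans ht.1.le, ht.2.le⟩ ht.1.le)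
    have B := aux_le hstar hst.1 (gstar v) v hv
    have C := H _ (gst.2.1 v hv)
    linarith

end
end

section
/- Let Φ be the cumulative distribution function of the standard Gaussian measure on ℝ, φ(s) = (2π)^{−1/2} exp(−s²/2) its density, and Φ⁻¹(p) := inf{x ∈ ℝ : Φ(x) ≥ p} for p ∈ (0,1). Let ρ ∈ (−1,1) with ρ ≠ 0 and set r := √(1−ρ²). Then for all u, v ∈ (0,1): ∫₀¹ min( Φ((Φ⁻¹(v) − ρ Φ⁻¹(t)) / √(1−ρ²)), u ) dt = ∫_{−∞}^{Φ⁻¹(u)} Φ((Φ⁻¹(v) − r·s)/|ρ|) φ(s) ds. That is, the upper product transform of the Gaussian copula with parameter ρ is the Gaussian copula with parameter √(1−ρ²): T(C_ρ^{Gauss}) = C_{√(1−ρ²)}^{Gauss}. -/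
open MeasureTheory Set

noncomputable section

/-- The standard normal cumulative distribution function `Φ`. -/
def stdNormalCDF (x : ℝ) : ℝ := ((ProbabilityTheory.gaussianReal 0 1) (Iic x)).toReal

/-- The standard normal density `φ(s) = (2π)^{-1/2} exp(−s²/2)`. -/
def stdNormalPDF (s : ℝ) : ℝ :=
  (Real.sqrt (2 * Real.pi))⁻¹ * Real.exp (-(s ^ 2) / 2)

/-- The standard normal quantile function `Φ⁻¹(p) = inf {x : Φ x ≥ p}`. -/
def stdNormalQuantile (p : ℝ) : ℝ := sInf {x : ℝ | p ≤ stdNormalCDF x}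

open ProbabilityTheory in
lemma aux_pdf (s : ℝ) : stdNormalPDF s = gaussianPDFReal 0 1 s := by
  simp [stdNormalPDF, gaussianPDFReal]

open ProbabilityTheory in
lemma aux_cdf (x : ℝ) : stdNormalCDF x = cdf (gaussianReal 0 1) x := by
  rw [cdf_eq_real]; rfl

open ProbabilityTheory in
lemma aux_cdf_integral (x : ℝ) : stdNormalCDF x = ∫ s in Iic x, gaussianPDFReal 0 1 s := by
  rw [stdNormalCDF, gaussianReal_apply_eq_integral _ one_ne_zero, ENNReal.toReal_ofReal]
  exact integral_nonneg fun _ => gaussianPDFReal_nonneg _ _ _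

open ProbabilityTheory in
lemma aux_cdf_sub (x y : ℝ) :
    stdNormalCDF y - stdNormalCDF x = ∫ s in x..y, gaussianPDFReal 0 1 s := by
  rw [aux_cdf_integral, aux_cdf_integral]
  exact intervalIntegral.integral_Iic_sub_Iic (integrable_gaussianPDFReal 0 1).integrableOn
    (integrable_gaussianPDFReal 0 1).integrableOn

open ProbabilityTheory in
lemma aux_continuous : Continuous stdNormalCDF := by
  have h : stdNormalCDF = fun x => stdNormalCDF 0 + ∫ s in (0:ℝ)..x, gaussianPDFReal 0 1 s := by
    funext x
    rw [← aux_cdf_sub]; ring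
  rw [h]
  exact continuous_const.add ((integrable_gaussianPDFReal 0 1).continuous_primitive 0)

open ProbabilityTheory in
lemma aux_strictMono : StrictMono stdNormalCDF := by
  intro x y hxy
  have h := aux_cdf_sub x y
  have : 0 < ∫ s in x..y, gaussianPDFReal 0 1 s :=
    intervalIntegral.intervalIntegral_pos_of_pos
      (integrable_gaussianPDFReal 0 1).intervalIntegrable
      (fun s => gaussianPDFReal_pos _ _ _ one_ne_zero) hxy
  linarith

lemma aux_quantile_cdf (x : ℝ) : stdNormalQuantile (stdNormalCDF x) = x := by
  have : {y : ℝ | stdNormalCDF x ≤ stdNormalCDF y} = Ici x := by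
    ext y; simp [aux_strictMono.le_iff_le]
  rw [stdNormalQuantile, this, csInf_Ici]

lemma aux_cdf_surj {p : ℝ} (hp : p ∈ Ioo (0:ℝ) 1) : ∃ x, stdNormalCDF x = p := by
  have hf : stdNormalCDF = ProbabilityTheory.cdf (ProbabilityTheory.gaussianReal 0 1) :=
    funext aux_cdf
  have h0 := ProbabilityTheory.tendsto_cdf_atBot (ProbabilityTheory.gaussianReal 0 1)
  have h1 := ProbabilityTheory.tendsto_cdf_atTop (ProbabilityTheory.gaussianReal 0 1)
  rw [← hf] at h0 h1
  obtain ⟨x, hx⟩ := (h0.eventually (gt_mem_nhds hp.1)).exists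
  obtain ⟨y, hy⟩ := (h1.eventually (lt_mem_nhds hp.2)).exists
  exact mem_range_of_exists_le_of_exists_ge aux_continuous ⟨x, hx.le⟩ ⟨y, hy.le⟩

lemma aux_cdf_quantile {p : ℝ} (hp : p ∈ Ioo (0:ℝ) 1) :
    stdNormalCDF (stdNormalQuantile p) = p := by
  obtain ⟨x, rfl⟩ := aux_cdf_surj hp
  rw [aux_quantile_cdf]

lemma aux_galois {p : ℝ} (hp : p ∈ Ioo (0:ℝ) 1) (x : ℝ) :
    stdNormalQuantile p ≤ x ↔ p ≤ stdNormalCDF x := by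
  rw [← aux_strictMono.le_iff_le, aux_cdf_quantile hp]

lemma aux_aemeasurable :
    AEMeasurable stdNormalQuantile (volume.restrict (Ioo (0:ℝ) 1)) := by
  refine aemeasurable_restrict_of_monotoneOn measurableSet_Ioo ?_
  intro p hp q hq hpq
  rw [aux_galois hp, aux_cdf_quantile hq]
  exact hpq

open ProbabilityTheory in
lemma aux_map :
    (volume.restrict (Ioo (0:ℝ) 1)).map stdNormalQuantile = gaussianReal 0 1 := by
  have : IsFiniteMeasure ((volume.restrict (Ioo (0:ℝ) 1)).map stdNormalQuantile) := by
    infer_instance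
  refine Measure.ext_of_Iic _ _ fun x => ?_
  rw [Measure.map_apply_of_aemeasurable aux_aemeasurable measurableSet_Iic,
    Measure.restrict_apply' measurableSet_Ioo]
  have hx0 : 0 ≤ stdNormalCDF x := ENNReal.toReal_nonneg
  have hx1 : stdNormalCDF x < 1 := by
    refine (aux_strictMono (lt_add_one x)).trans_le ?_
    rw [aux_cdf]; exact cdf_le_one _ _
  have h : stdNormalQuantile ⁻¹' Iic x ∩ Ioo 0 1 = Ioc 0 (stdNormalCDF x) := by
    ext p
    simp only [mem_inter_iff, mem_preimage, mem_Iic, mem_Ioc]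
    constructor
    · rintro ⟨h, hp⟩
      exact ⟨hp.1, (aux_galois hp x).1 h⟩
    · rintro ⟨h, hp⟩
      have hp' : p ∈ Ioo (0:ℝ) 1 := ⟨h, hp.trans_lt hx1⟩
      exact ⟨(aux_galois hp' x).2 hp, hp'⟩
  rw [h, Real.volume_Ioc, sub_zero, stdNormalCDF, ENNReal.ofReal_toReal (measure_ne_top _ _)]

open ProbabilityTheory in
lemma aux_neg (ρ c : ℝ) (hρ : ρ ≠ 0) :
    (gaussianReal 0 1 {x | ρ * x ≤ c}).toReal = stdNormalCDF (c / |ρ|) := by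
  rcases lt_or_gt_of_ne hρ with h | h
  · have hm : (gaussianReal 0 1).map (fun x ↦ -x) = gaussianReal 0 1 := by
      rw [gaussianReal_map_neg, neg_zero]
    rw [stdNormalCDF, ← hm, Measure.map_apply measurable_neg measurableSet_Iic, hm]
    congr 2
    ext x
    simp only [mem_ofPred_eq, mem_preimage, mem_Iic, abs_of_neg h]
    rw [le_div_iff₀ (by linarith)]
    constructor <;> intro _ <;> linarith
  · rw [stdNormalCDF]
    congr 2
    ext x
    simp only [mem_ofPred_eq, mem_Iic, abs_of_pos h]
    rw [le_div_iff₀ h, mul_comm]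

open ProbabilityTheory in
lemma aux_fubini (ρ σ a b : ℝ) (hρ : ρ ≠ 0) (hσ : 0 < σ) :
    ∫ x, min (stdNormalCDF ((a - ρ * x) / σ)) (stdNormalCDF b) ∂(gaussianReal 0 1)
      = ∫ s in Iic b, stdNormalCDF ((a - σ * s) / |ρ|) ∂(gaussianReal 0 1) := by
  set γ := gaussianReal 0 1 with hγ
  have hS : MeasurableSet {p : ℝ × ℝ | p.2 ≤ b ∧ ρ * p.1 + σ * p.2 ≤ a} := by
    have e1 : MeasurableSet {p : ℝ × ℝ | p.2 ≤ b} :=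
      measurableSet_le (by fun_prop) (by fun_prop)
    have e2 : MeasurableSet {p : ℝ × ℝ | ρ * p.1 + σ * p.2 ≤ a} :=
      measurableSet_le (by fun_prop) (by fun_prop)
    convert e1.inter e2 using 1
    ext p; simp
  set S := {p : ℝ × ℝ | p.2 ≤ b ∧ ρ * p.1 + σ * p.2 ≤ a}
  have h1 : ∫ x, min (stdNormalCDF ((a - ρ * x) / σ)) (stdNormalCDF b) ∂γ
      = ((γ.prod γ) S).toReal := by
    rw [Measure.prod_apply hS, ← integral_toReal (measurable_measure_prodMk_left hS).aemeasurable
      (ae_of_all _ fun _ => measure_lt_top _ _)]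
    refine integral_congr_ae (ae_of_all _ fun x => ?_)
    simp only
    rw [← aux_strictMono.monotone.map_min, stdNormalCDF]
    congr 2
    ext s
    simp only [S, mem_preimage, mem_ofPred_eq, mem_Iic, le_min_iff, le_div_iff₀ hσ]
    constructor
    · rintro ⟨h, h'⟩; exact ⟨h', by linarith⟩
    · rintro ⟨h, h'⟩; exact ⟨by linarith, h⟩
  rw [h1, Measure.prod_apply_symm hS,
    ← integral_toReal (measurable_measure_prodMk_right hS).aemeasurable
      (ae_of_all _ fun _ => measure_lt_top _ _), ← integral_indicator measurableSet_Iic]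
  refine integral_congr_ae (ae_of_all _ fun s => ?_)
  simp only [indicator, mem_Iic]
  split_ifs with hs
  · rw [← aux_neg ρ _ hρ]
    congr 2
    ext x
    simp only [S, mem_preimage, mem_ofPred_eq, hs, true_and]
    constructor <;> intro _ <;> linarith
  · have : (fun x => (x, s)) ⁻¹' S = ∅ := by
      ext x; simp [S, hs]
    rw [this]; simp

/-- For `ρ ∈ (−1,1)`, `ρ ≠ 0`, and `r = √(1−ρ²)`, the upper
product transform of the Gaussian copula with parameter `ρ` is the Gaussian
copula with parameter `√(1−ρ²)`: for all `u, v ∈ (0,1)`,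
`∫₀¹ min(Φ((Φ⁻¹(v) − ρΦ⁻¹(t))/√(1−ρ²)), u) dt
  = ∫_{−∞}^{Φ⁻¹(u)} Φ((Φ⁻¹(v) − r·s)/|ρ|) φ(s) ds`,
i.e. `T(C_ρ^Gauss) = C_{√(1−ρ²)}^Gauss`. -/
theorem upperProductTransform_gaussian (ρ : ℝ) (hρ : ρ ∈ Ioo (-1:ℝ) 1) (hρ0 : ρ ≠ 0) :
    ∀ u ∈ Ioo (0:ℝ) 1, ∀ v ∈ Ioo (0:ℝ) 1,
      (∫ t in (0:ℝ)..1,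
          min (stdNormalCDF ((stdNormalQuantile v - ρ * stdNormalQuantile t) /
                Real.sqrt (1 - ρ ^ 2))) u)
        = ∫ s in Iic (stdNormalQuantile u),
            stdNormalCDF ((stdNormalQuantile v - Real.sqrt (1 - ρ ^ 2) * s) / |ρ|)
              * stdNormalPDF s := by
  intro u hu v hv
  have hσ : 0 < Real.sqrt (1 - ρ ^ 2) := Real.sqrt_pos.2 (by nlinarith [hρ.1, hρ.2])
  generalize stdNormalQuantile v = a
  generalize Real.sqrt (1 - ρ ^ 2) = σ at hσ ⊢
  have hm : Measurable fun x => min (stdNormalCDF ((a - ρ * x) / σ)) u := by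
    have := aux_continuous.measurable
    fun_prop
  have h := aux_fubini ρ σ a (stdNormalQuantile u) hρ0 hσ
  rw [aux_cdf_quantile hu] at h
  rw [intervalIntegral.integral_of_le zero_le_one, integral_Ioc_eq_integral_Ioo]
  rw [← aux_map, integral_map aux_aemeasurable hm.aestronglyMeasurable, aux_map] at h
  rw [h, ← integral_indicator measurableSet_Iic,
    ProbabilityTheory.integral_gaussianReal_eq_integral_smul one_ne_zero,
    ← integral_indicator measurableSet_Iic]
  refine integral_congr_ae (ae_of_all _ fun s => ?_)
  simp only [indicator, smul_eq_mul, aux_pdf]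
  split_ifs
  · ring
  · simp

end
end

section
/- Let C be a bivariate copula with derivative family (h_v)_{v∈[0,1]}, with (v,t) ↦ h_v(t) jointly Lebesgue-measurable. Then 3 ∫₀¹ ∫₀¹ |h_v(t) − v| dt dv = 3 − 6 ∫₀¹ ∫₀¹ min(h_v(t), v) dt dv. Equivalently, the dependence measure ζ₁(C) = 3 ∫₀¹∫₀¹ |∂₂C(v,t) − v| dt dv satisfies ζ₁(C) = 1 − ψ(T(C)), where ψ(D) = 6 ∫₀¹ D(t,t) dt − 2 is Spearman's footrule and T(C)(v,u) = ∫₀¹ min(h_v(t), u) dt is the upper product transform of C. -/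
open MeasureTheory Set

noncomputable section

/-- For a copula `C` with (jointly measurable) derivative
family `(h_v)`:
`3 ∫₀¹∫₀¹ |h_v(t) − v| dt dv = 3 − 6 ∫₀¹∫₀¹ min(h_v(t), v) dt dv`,
i.e. the dependence measure `ζ₁(C) = 3∫∫|∂₂C(v,t) − v| dt dv` satisfies
`ζ₁(C) = 1 − ψ(T(C))` where `ψ` is Spearman's footrule and `T` the upper
product transform. -/
theorem zeta1_eq_one_sub_footrule_T (C h : ℝ → ℝ → ℝ)
    (hC : IsCopula C) (hh : IsDerivFamily C h)
    (hjoint : Measurable (Function.uncurry h)) :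
    3 * (∫ v in (0:ℝ)..1, ∫ t in (0:ℝ)..1, |h v t - v|)
      = 3 - 6 * ∫ v in (0:ℝ)..1, ∫ t in (0:ℝ)..1, min (h v t) v := by
  obtain ⟨hm, hb, -, -, hint⟩ := hh
  have bdd : ∀ v ∈ Icc (0:ℝ) 1, ∀ t ∈ Icc (0:ℝ) 1, ‖min (h v t) v‖ ≤ 1 := by
    intro v hv t ht
    have h1 := hb v hv t ht
    rw [Real.norm_eq_abs, abs_of_nonneg (le_min h1.1 hv.1)]
    exact (min_le_right _ _).trans hv.2
  have key : ∀ (f : ℝ → ℝ), Measurable f → (∀ t ∈ Icc (0:ℝ) 1, ‖f t‖ ≤ 1) →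
      IntervalIntegrable f volume 0 1 := by
    intro f hf hfb
    rw [intervalIntegrable_iff_integrableOn_Icc_of_le zero_le_one]
    refine Measure.integrableOn_of_bounded (M := 1) (by simp) hf.aestronglyMeasurable ?_
    exact (ae_restrict_iff' measurableSet_Icc).2 (Filter.Eventually.of_forall hfb)
  have inner : ∀ v ∈ Icc (0:ℝ) 1, (∫ t in (0:ℝ)..1, |h v t - v|)
      = 2 * v - 2 * ∫ t in (0:ℝ)..1, min (h v t) v := by
    intro v hv
    have e : ∀ t, |h v t - v| = (h v t + v) - 2 * min (h v t) v := by
      intro t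
      rcases le_total (h v t) v with hle | hle
      · rw [min_eq_left hle, abs_of_nonpos (by linarith)]; ring
      · rw [min_eq_right hle, abs_of_nonneg (by linarith)]; ring
    have i1 : IntervalIntegrable (h v) volume 0 1 := by
      refine key _ (hm v hv) ?_
      intro t ht
      have h1 := hb v hv t ht
      rw [Real.norm_eq_abs, abs_of_nonneg h1.1]
      exact h1.2
    have i2 : IntervalIntegrable (fun t => min (h v t) v) volume 0 1 :=
      key _ ((hm v hv).min measurable_const) (bdd v hv)
    have i3 : IntervalIntegrable (fun _ : ℝ => v) volume 0 1 := intervalIntegrable_const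
    simp_rw [e]
    rw [intervalIntegral.integral_sub (i1.add i3) (i2.const_mul 2),
      intervalIntegral.integral_add i1 i3, hint v hv, intervalIntegral.integral_const_mul,
      intervalIntegral.integral_const]
    simp
    ring
  have i4 : IntervalIntegrable (fun v => ∫ t in (0:ℝ)..1, min (h v t) v) volume 0 1 := by
    refine key _ ?_ ?_
    · simp_rw [intervalIntegral.integral_of_le (zero_le_one (α := ℝ))]
      have hmm : Measurable (Function.uncurry fun v t => min (h v t) v) :=
        hjoint.min measurable_fst
      exact (hmm.stronglyMeasurable.integral_prod_right
        (ν := volume.restrict (Ioc (0:ℝ) 1))).measurable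
    · intro v hv
      have := intervalIntegral.norm_integral_le_of_norm_le_const (a := (0:ℝ)) (b := 1) (C := 1)
        (f := fun t => min (h v t) v) (fun t ht => by
          rw [uIoc_of_le zero_le_one] at ht
          exact bdd v hv t ⟨ht.1.le, ht.2⟩)
      simpa using this
  have outer : (∫ v in (0:ℝ)..1, ∫ t in (0:ℝ)..1, |h v t - v|)
      = ∫ v in (0:ℝ)..1, (2 * v - 2 * ∫ t in (0:ℝ)..1, min (h v t) v) := by
    refine intervalIntegral.integral_congr ?_
    intro v hv
    rw [uIcc_of_le zero_le_one] at hv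
    exact inner v hv
  have i5 : IntervalIntegrable (fun v : ℝ => 2 * v) volume 0 1 :=
    (by fun_prop : Continuous fun v : ℝ => 2 * v).intervalIntegrable 0 1
  rw [outer, intervalIntegral.integral_sub i5 (i4.const_mul 2),
    intervalIntegral.integral_const_mul, intervalIntegral.integral_const_mul, integral_id]
  ring

end
end
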